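/- Let p > 3 be a prime. If p ≡ 1 (mod 3), write p = x^2 + 3y^2 with integers x, y; then Σ_{k=0}^{p−1} k^2·C(2k,k)^3/16^k ≡ (4/9)x^2 − (5/9)p + p^2/(36x^2) (mod p^3) and Σ_{k=0}^{p−1} k^3·C(2k,k)^3/16^k ≡ −(2/9)x^2 + (4/9)p − 7p^2/(72x^2) (mod p^3). If p ≡ 2 (mod 3), then Σ_{k=0}^{p−1} k^2·C(2k,k)^3/16^k ≡ −(2/9)R_3(p) − (1/3)p (mod p^2) and Σ_{k=0}^{p−1} k^3·C(2k,k)^3/16^k ≡ (4/9)R_3(p) + (1/3)p (mod p^2). -/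

import Mathlib

/-- `a ≡ b (mod p^r)` for rationals: the numerator of `a - b` in lowest terms
is divisible by `p^r`. -/
def ratCongr (p r : ℕ) (a b : ℚ) : Prop := (p : ℤ)^r ∣ (a - b).num
/-- `R_3(p)`. -/
def R3 (p : ℕ) : ℚ :=
  (1 + 2*(p:ℚ) + 4/3*(2^(p-1) - 1) - 3/2*(3^(p-1) - 1)) *
    (((p-1)/2).choose (p/6) : ℚ)^2

/-!
The terms of certain terminating `₃F₂` series at `4` satisfy the recurrence of `C(2k,k)³ / 16ᵏ`
deformed by `p = 2n + 1`. One such series agrees with the central binomial sums modulo `p²`, and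
subtracting four times the difference of two Gessel–Stanton series improves this to `p³`.
Wilf–Zeilberger recurrences evaluate the moments of weight `1`, `3k + 1` and `(3k + 1)(3k + 2)`
as products of gamma type, and a telescoping relation yields the cubic moment.

For `p ≡ 1 (mod 3)` the product is, modulo `p³`, the square of a Jacobi sum `J` of the Teichmüller
lifts of a cubic and the quadratic character: expanding powers of `1 - Gᵏ`, for `G` the lift of a
generator, gives binomial coefficients, which are extrapolated to a half-integer parameter from
their values at `0, 1, 2`. If `K` is the conjugate sum, then `J K = p` and `(J + K)² = 4x²`. For
`p ≡ 2 (mod 3)` the duplication formula and the Fermat quotients of `2` and `3` turn the product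
into `R₃(p)`.
-/

open Finset

section HypergeometricSums

variable {K : Type*} [Field K]

/-- The `k`-th term of the hypergeometric series `₃F₂(a, b, c; d, e; 4)`. -/
def hypTerm (a b c d e : K) (k : ℕ) : K :=
  ∏ i ∈ range k, 4 * (a + i) * (b + i) * (c + i) / ((1 + i) * (d + i) * (e + i))

/-- The terms of `₃F₂(-n, n + 1, 1/2; 2n + 2, -2n; 4)`. -/
def doubledTerm (K : Type*) [Field K] (n : ℕ) : ℕ → K :=
  hypTerm (-n : K) (n + 1) (1 / 2) (2 * n + 2) (-2 * n)

/-- The terms of the Gessel–Stanton series `₃F₂(-n, x, 1/2 - n - x; 2x, 1 - 2n - 2x; 4)`. -/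
def gesselStantonTerm (n : ℕ) (x : K) : ℕ → K :=
  hypTerm (-n : K) x (1 / 2 - n - x) (2 * x) (1 - 2 * n - 2 * x)

lemma hypTerm_zero (a b c d e : K) : hypTerm a b c d e 0 = 1 := prod_range_zero _

lemma sum_range_succ_eq_of_telescoping {M : Type*} [AddCommGroup M] {f g G : ℕ → M} {n : ℕ}
    (hstep : ∀ k < n, f k - g k = G (k + 1) - G k) (hzero : G 0 = 0) (hlast : f n = -G n) :
    ∑ k ∈ range (n + 1), f k = ∑ k ∈ range n, g k := by
  have hsum : ∑ k ∈ range n, (f k - g k) = G n := by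
    rw [sum_congr rfl fun k hk ↦ hstep k (mem_range.1 hk), sum_range_sub, hzero, sub_zero]
  rw [sum_range_succ, hlast, ← hsum, sum_sub_distrib]
  abel

lemma add_ne_zero_of_two_mul_add_ne_zero {x : K} (hx : ∀ k : ℕ, 2 * x + k ≠ 0) (n : ℕ) :
    n + x ≠ 0 := fun h ↦ hx (2 * n) (by push_cast; linear_combination 2 * h)

lemma two_mul_add_sub_ne_zero {x : K} (hx : ∀ k : ℕ, 2 * x + k ≠ 0) {n k : ℕ} (hk : k ≤ n) :
    2 * (n + x) - k ≠ 0 := by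
  obtain ⟨j, rfl⟩ := Nat.exists_eq_add_of_le hk
  convert hx (2 * j + k) using 1
  push_cast
  ring

lemma two_mul_add_one_add_sub_ne_zero {x : K} (hx : ∀ k : ℕ, 2 * x + k ≠ 0) {n k : ℕ}
    (hk : k ≤ n) : 2 * n + 1 + 2 * x - k ≠ 0 := by
  obtain ⟨j, rfl⟩ := Nat.exists_eq_add_of_le hk
  convert hx (2 * j + k + 1) using 1
  push_cast
  ring

variable [CharZero K]

lemma hypTerm_succ_mul (a b c : K) {d e : K} {k : ℕ} (hd : d + k ≠ 0) (he : e + k ≠ 0) :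
    hypTerm a b c d e (k + 1) * ((k + 1) * (d + k) * (e + k)) =
      hypTerm a b c d e k * (4 * (a + k) * (b + k) * (c + k)) := by
  have hk : (1 + k : K) ≠ 0 := by norm_cast; omega
  rw [hypTerm, prod_range_succ, ← hypTerm, mul_assoc, add_comm (k : K) 1,
    div_mul_cancel₀ _ (mul_ne_zero (mul_ne_zero hk hd) he)]

lemma doubledTerm_succ_mul (n k : ℕ) (hk : k < 2 * n) :
    doubledTerm K n (k + 1) * ((k + 1) * (2 * n + 2 + k) * (2 * n - k)) =
      doubledTerm K n k * (2 * (2 * k + 1) * (n - k) * (n + 1 + k)) := by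
  have hd : (2 * n + 2 + k : K) ≠ 0 := by norm_cast; omega
  have he : (-2 * n + k : K) ≠ 0 := by
    rw [neg_mul, neg_add_eq_sub]
    exact sub_ne_zero.2 (by norm_cast; omega)
  unfold doubledTerm
  linear_combination -hypTerm_succ_mul (-n : K) (n + 1) (1 / 2) hd he

lemma doubledTerm_mul_eq_succ (n k : ℕ) (hk : k ≤ n) :
    doubledTerm K n k * ((2 * n + 3) * (2 * (n + 1) - k) * (2 * n + 1 - k) * (n + 1 + k)) =
      doubledTerm K (n + 1) k *
        ((2 * n + 1) * (n + 1 - k) * (2 * n + 3 + k) * (2 * n + 2 + k)) := by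
  induction k with
  | zero =>
    simp only [doubledTerm, hypTerm_zero]
    push_cast
    ring
  | succ k ih =>
    have g₁ : (k + 1 : K) ≠ 0 := by norm_cast
    have g₂ : (2 * n + 2 + k : K) ≠ 0 := by norm_cast; omega
    have g₃ : (2 * n - k : K) ≠ 0 := sub_ne_zero.2 (by norm_cast; omega)
    have g₄ : (2 * n + 4 + k : K) ≠ 0 := by norm_cast; omega
    have g₅ : (2 * (n + 1) - k : K) ≠ 0 := sub_ne_zero.2 (by norm_cast; omega)
    have h := doubledTerm_succ_mul (K := K) n k (by omega)
    have h' := doubledTerm_succ_mul (K := K) (n + 1) k (by omega)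
    refine mul_right_cancel₀
      (mul_ne_zero (mul_ne_zero (mul_ne_zero (mul_ne_zero g₁ g₂) g₃) g₄) g₅) ?_
    push_cast at h' ⊢
    linear_combination
      (2 * n + 3) * (2 * n + 1 - k) * (n + 2 + k) * (2 * n - k) * (2 * n + 4 + k) *
        (2 * (n + 1) - k) * h +
      2 * (2 * k + 1) * (n - k) * (2 * n - k) * (2 * n + 4 + k) * (n + 2 + k) *
        ih (by omega) -
      (2 * n + 1) * (n - k) * (2 * n + 3 + k) * (2 * n + 2 + k) * (2 * n - k) * (2 * n + 4 + k) * h'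

lemma doubledTerm_succ_mul_certificate (n k : ℕ) (hk : k ≤ n) (c : K) :
    doubledTerm K (n + 1) (k + 1) *
        ((k + 1 : ℕ) * (2 * n + 3 + (k + 1 : ℕ)) * c /
          ((2 * (n + 1) - (k + 1 : ℕ)) * (n + 1 + (k + 1 : ℕ)))) =
      doubledTerm K (n + 1) k *
        (2 * (2 * k + 1) * (n + 1 - k) * c) / ((2 * (n + 1) - k) * (2 * n + 1 - k)) := by
  have g₂ : (n + 2 + k : K) ≠ 0 := by norm_cast; omega
  have g₃ : (2 * n + 1 - k : K) ≠ 0 := sub_ne_zero.2 (by norm_cast; omega)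
  have g₄ : (2 * (n + 1) - k : K) ≠ 0 := sub_ne_zero.2 (by norm_cast; omega)
  have h := doubledTerm_succ_mul (K := K) (n + 1) k (by omega)
  have e₁ : (2 * (n + 1) - (k + 1 : ℕ) : K) = 2 * n + 1 - k := by push_cast; ring
  have e₂ : (n + 1 + (k + 1 : ℕ) : K) = n + 2 + k := by push_cast; ring
  rw [e₁, e₂, mul_div_assoc', div_eq_div_iff (mul_ne_zero g₃ g₂) (mul_ne_zero g₄ g₃)]
  push_cast at h ⊢
  linear_combination c * (2 * n + 1 - k) * h

/- The Wilf–Zeilberger method: `P` is the numerator of the rational certificate, and `hstep`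
is the telescoping identity cleared of denominators. -/
lemma mul_sum_doubledTerm_succ (n : ℕ) (q P : ℕ → K) (ρ σ : K)
    (hstep : ∀ k ≤ n,
      ρ * q k * ((2 * (n + 1) - k) * (2 * n + 1 - k) * (n + 1 + k)) -
        σ * q k * ((2 * n + 1) * (n + 1 - k) * (2 * n + 3 + k) * (2 * n + 2 + k)) =
      2 * (n + 1 - k) * (2 * k + 1) * (n + 1 + k) * P (k + 1) -
        k * (2 * n + 3 + k) * (2 * n + 1 - k) * P k)
    (hlast : ρ * q (n + 1) * (2 * (n + 1)) = -(3 * n + 4) * P (n + 1)) :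
    ρ * ∑ k ∈ range (n + 2), q k * doubledTerm K (n + 1) k =
      (2 * n + 3) * σ * ∑ k ∈ range (n + 1), q k * doubledTerm K n k := by
  rw [mul_sum, mul_sum]
  refine sum_range_succ_eq_of_telescoping (G := fun k ↦ doubledTerm K (n + 1) k *
    (k * (2 * n + 3 + k) * P k / ((2 * (n + 1) - k) * (n + 1 + k)))) (fun k hk ↦ ?_) (by simp) ?_
  · have g₁ : (n + 1 + k : K) ≠ 0 := by norm_cast; omega
    have g₃ : (2 * n + 1 - k : K) ≠ 0 := sub_ne_zero.2 (by norm_cast; omega)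
    have g₄ : (2 * (n + 1) - k : K) ≠ 0 := sub_ne_zero.2 (by norm_cast; omega)
    have g₅ : (2 * n + 3 : K) ≠ 0 := by norm_cast
    have hshift := eq_div_of_mul_eq (mul_ne_zero (mul_ne_zero (mul_ne_zero g₅ g₄) g₃) g₁)
      (doubledTerm_mul_eq_succ (K := K) n k (by omega))
    rw [doubledTerm_succ_mul_certificate n k (by omega), hshift]
    field_simp
    linear_combination doubledTerm K (n + 1) k * hstep k (by omega)
  · have g₁ : (n + 1 : K) ≠ 0 := by norm_cast
    have e₁ : (2 * (n + 1) - (n + 1) : K) = n + 1 := by ring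
    have e₂ : (n + 1 + (n + 1) : K) = 2 * (n + 1) := by ring
    push_cast
    rw [e₁, e₂]
    field_simp
    linear_combination doubledTerm K (n + 1) (n + 1) * hlast

lemma sum_linear_mul_doubledTerm (n : ℕ) :
    ∑ k ∈ range (n + 1), (3 * k + 1) * doubledTerm K n k = 2 * n + 1 := by
  induction n with
  | zero => simp [doubledTerm, hypTerm_zero]
  | succ n ih =>
    have h₁ : (2 * n + 1 : K) ≠ 0 := by norm_cast
    have h := mul_sum_doubledTerm_succ (K := K) n (fun k ↦ 3 * k + 1)
      (fun k ↦ -2 * (2 * n + 1) * k) (2 * n + 1) 1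
      (fun k _ ↦ by push_cast; ring) (by push_cast; ring)
    rw [ih] at h
    refine mul_left_cancel₀ h₁ ?_
    push_cast
    linear_combination h

lemma sum_doubledTerm (n : ℕ) :
    ∑ k ∈ range (n + 1), doubledTerm K n k =
      (2 * n + 1) * ∏ i ∈ range n, (3 * i + 2 : K) / (3 * i + 4) := by
  induction n with
  | zero => simp [doubledTerm, hypTerm_zero]
  | succ n ih =>
    have h₁ : (2 * n + 1 : K) ≠ 0 := by norm_cast
    have h₂ : (3 * n + 4 : K) ≠ 0 := by norm_cast
    have h := mul_sum_doubledTerm_succ (K := K) n (fun _ ↦ 1)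
      (fun _ ↦ -((2 * n + 1) * (2 * n + 2))) ((2 * n + 1) * (3 * n + 4)) (3 * n + 2)
      (fun k _ ↦ by ring) (by ring)
    simp only [one_mul] at h
    rw [ih] at h
    rw [prod_range_succ, ← mul_assoc, mul_div_assoc', eq_div_iff h₂]
    refine mul_left_cancel₀ h₁ ?_
    push_cast
    linear_combination h

lemma sum_quadratic_mul_doubledTerm (n : ℕ) :
    ∑ k ∈ range (n + 1), (3 * k + 1) * (3 * k + 2) * doubledTerm K n k =
      2 * (2 * n + 1) * ∏ i ∈ range n, (3 * i + 4 : K) / (3 * i + 2) := by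
  induction n with
  | zero => simp [doubledTerm, hypTerm_zero]
  | succ n ih =>
    have h₁ : (2 * n + 1 : K) ≠ 0 := by norm_cast
    have h₂ : (3 * n + 2 : K) ≠ 0 := by norm_cast
    have h := mul_sum_doubledTerm_succ (K := K) n (fun k ↦ (3 * k + 1) * (3 * k + 2))
      (fun k ↦ -2 * (n + 1) * (2 * n + 1) * (3 * k + 2) * (3 * k - 1))
      ((2 * n + 1) * (3 * n + 2)) (3 * n + 4)
      (fun k _ ↦ by push_cast; ring) (by push_cast; ring)
    rw [ih] at h
    rw [prod_range_succ, ← mul_assoc, mul_div_assoc', eq_div_iff h₂]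
    refine mul_left_cancel₀ h₁ ?_
    push_cast
    linear_combination h

lemma gesselStantonTerm_succ_mul {x : K} (hx : ∀ k : ℕ, 2 * x + k ≠ 0) (n k : ℕ)
    (hk : k < 2 * n) :
    gesselStantonTerm n x (k + 1) * ((k + 1) * (2 * x + k) * (2 * n + 2 * x - 1 - k)) =
      gesselStantonTerm n x k * (2 * (n - k) * (x + k) * (2 * k + 1 - 2 * n - 2 * x)) := by
  have he : 1 - 2 * n - 2 * x + k ≠ 0 := by
    obtain ⟨j, hj⟩ := Nat.exists_eq_add_of_lt hk
    have hj : (2 * n : K) = k + j + 1 := mod_cast hj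
    rw [hj]
    refine ne_of_eq_of_ne ?_ (neg_ne_zero.2 (hx j))
    ring
  unfold gesselStantonTerm
  linear_combination -hypTerm_succ_mul (-n : K) x (1 / 2 - n - x) (hx k) he

lemma gesselStantonTerm_mul_eq_succ {x : K} (hx : ∀ k : ℕ, 2 * x + k ≠ 0) (n k : ℕ)
    (hk : k ≤ n) :
    gesselStantonTerm n x k * ((n + 1) * (2 * n + 1 + 2 * x - k) * (2 * (n + x) - k)) =
      gesselStantonTerm (n + 1) x k *
        (2 * (n + x) * (n + 1 - k) * (2 * n + 1 + 2 * x - 2 * k)) := by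
  induction k with
  | zero =>
    simp only [gesselStantonTerm, hypTerm_zero]
    push_cast
    ring
  | succ k ih =>
    have g₁ : (k + 1 : K) ≠ 0 := by norm_cast
    have g₂ := two_mul_add_one_add_sub_ne_zero hx (Nat.le_of_succ_le hk)
    have h := gesselStantonTerm_succ_mul hx n k (by omega)
    have h' := gesselStantonTerm_succ_mul hx (n + 1) k (by omega)
    refine mul_right_cancel₀ (mul_ne_zero (mul_ne_zero g₁ (hx k)) g₂) ?_
    push_cast at h' ⊢
    linear_combination
      (n + 1) * (2 * (n + x) - k) * (2 * n + 1 + 2 * x - k) * h +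
      2 * (n - k) * (x + k) * (2 * k + 1 - 2 * n - 2 * x) * ih (by omega) -
      2 * (n + x) * (n - k) * (2 * n - 1 + 2 * x - 2 * k) * h'

lemma gesselStantonTerm_succ_mul_certificate {x : K} (hx : ∀ k : ℕ, 2 * x + k ≠ 0) (n k : ℕ)
    (hk : k ≤ n) (c : K) :
    gesselStantonTerm (n + 1) x (k + 1) * ((k + 1 : ℕ) * (2 * x + (k + 1 : ℕ) - 1) * c /
        ((n + 1) * (2 * n + 1 + 2 * x - (k + 1 : ℕ)))) =
      -(gesselStantonTerm (n + 1) x k *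
        (2 * (n + 1 - k) * (x + k) * (2 * n + 1 + 2 * x - 2 * k) * c) /
        ((n + 1) * (2 * n + 1 + 2 * x - k) * (2 * (n + x) - k))) := by
  have h₁ : (n + 1 : K) ≠ 0 := by norm_cast
  have h₂ := two_mul_add_one_add_sub_ne_zero hx hk
  have h₃ := two_mul_add_sub_ne_zero hx hk
  have h := gesselStantonTerm_succ_mul hx (n + 1) k (by omega)
  have e : 2 * n + 1 + 2 * x - (k + 1 : ℕ) = 2 * (n + x) - k := by push_cast; ring
  rw [e, mul_div_assoc', ← neg_div, div_eq_div_iff (mul_ne_zero h₁ h₃)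
    (mul_ne_zero (mul_ne_zero h₁ h₂) h₃)]
  push_cast at h ⊢
  linear_combination c * (n + 1) * (2 * (n + x) - k) * h

lemma sum_mul_gesselStantonTerm_succ {x : K} (hx : ∀ k : ℕ, 2 * x + k ≠ 0) (n : ℕ)
    (q w P : ℕ → K)
    (hstep : ∀ k ≤ n,
      (n + 1) * (2 * n + 1 + 2 * x - k) * (2 * (n + x) - k) * q k -
        2 * (n + x) * (n + 1 - k) * (2 * n + 1 + 2 * x - 2 * k) * w k =
      2 * (n + 1 - k) * (x + k) * (2 * n + 1 + 2 * x - 2 * k) * P (k + 1) +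
        k * (2 * x + k - 1) * (2 * (n + x) - k) * P k)
    (hlast : q (n + 1) = P (n + 1)) :
    ∑ k ∈ range (n + 2), q k * gesselStantonTerm (n + 1) x k =
      ∑ k ∈ range (n + 1), w k * gesselStantonTerm n x k := by
  have h₁ : (n + 1 : K) ≠ 0 := by norm_cast
  refine sum_range_succ_eq_of_telescoping (G := fun k ↦ -(gesselStantonTerm (n + 1) x k *
    (k * (2 * x + k - 1) * P k / ((n + 1) * (2 * n + 1 + 2 * x - k)))))
    (fun k hk ↦ ?_) (by simp) ?_
  · have hkn := Nat.le_of_lt_succ hk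
    have h₂ := two_mul_add_one_add_sub_ne_zero hx hkn
    have h₃ := two_mul_add_sub_ne_zero hx hkn
    have hshift := eq_div_of_mul_eq (mul_ne_zero (mul_ne_zero h₁ h₂) h₃)
      (gesselStantonTerm_mul_eq_succ hx n k hkn)
    rw [gesselStantonTerm_succ_mul_certificate hx n k hkn, hshift]
    field_simp
    linear_combination gesselStantonTerm (n + 1) x k * hstep k (by omega)
  · have h₂ : n + 2 * x ≠ 0 := by
      rw [add_comm]
      exact hx n
    have e₁ : 2 * x + (n + 1 : ℕ) - 1 = n + 2 * x := by push_cast; ring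
    have e₂ : 2 * n + 1 + 2 * x - (n + 1 : ℕ) = n + 2 * x := by push_cast; ring
    rw [hlast, e₁, e₂]
    push_cast
    field_simp

/-- The moment `∑ (3k - 2n)ⱼ tₖ` of the Gessel–Stanton series, `(·)ⱼ` being the rising
factorial. Raising `n` permutes the cases `j = 0, 1, 2` cyclically. -/
def gesselStantonMoment (j n : ℕ) (x : K) : K :=
  ∑ k ∈ range (n + 1), (∏ i ∈ range j, (3 * k - 2 * n + i : K)) * gesselStantonTerm n x k

lemma gesselStantonMoment_zero_succ {x : K} (hx : ∀ k : ℕ, 2 * x + k ≠ 0) (n : ℕ) :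
    2 * (n + x) * (2 * n + 6 * x - 1) * gesselStantonMoment 0 (n + 1) x =
      gesselStantonMoment 2 n x := by
  have h := sum_mul_gesselStantonTerm_succ hx n
    (fun _ ↦ 2 * (n + x) * (2 * n + 6 * x - 1)) (fun k ↦ (3 * k - 2 * n) * (3 * k - 2 * n + 1))
    (fun k ↦ -2 * (n + x) * (6 * k - 8 * n - 6 * x - 5))
    (fun k _ ↦ by push_cast; ring) (by push_cast; ring)
  simpa [gesselStantonMoment, prod_range_succ, mul_sum, mul_assoc] using h

lemma gesselStantonMoment_one_succ {x : K} (hx : ∀ k : ℕ, 2 * x + k ≠ 0) (n : ℕ) :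
    (n + x) * gesselStantonMoment 1 (n + 1) x =
      -((n + 1) * (2 * n + 3 * x)) * gesselStantonMoment 0 n x := by
  have h := sum_mul_gesselStantonTerm_succ hx n
    (fun k ↦ (n + x) * (3 * k - 2 * (n + 1))) (fun _ ↦ -((n + 1) * (2 * n + 3 * x)))
    (fun _ ↦ (n + 1) * (n + x)) (fun k _ ↦ by ring) (by push_cast; ring)
  simpa [gesselStantonMoment, prod_range_succ, mul_sum, mul_assoc] using h

lemma gesselStantonMoment_two_succ {x : K} (hx : ∀ k : ℕ, 2 * x + k ≠ 0) (n : ℕ) :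
    (n + x) * gesselStantonMoment 2 (n + 1) x =
      -((n + 1) * (2 * n + 1 + 3 * x)) * gesselStantonMoment 1 n x := by
  have h := sum_mul_gesselStantonTerm_succ hx n
    (fun k ↦ (n + x) * ((3 * k - 2 * (n + 1)) * (3 * k - 2 * (n + 1) + 1)))
    (fun k ↦ -((n + 1) * (2 * n + 1 + 3 * x)) * (3 * k - 2 * n))
    (fun k ↦ (n + 1) * (n + x) * (3 * k - 2 * n - 1))
    (fun k _ ↦ by push_cast; ring) (by push_cast; ring)
  simpa [gesselStantonMoment, prod_range_succ, mul_sum, mul_assoc] using h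

lemma gesselStantonMoment_three_mul {x : K} (hx : ∀ k : ℕ, 2 * x + k ≠ 0)
    (hx' : ∀ k : ℕ, 2 * k + 6 * x - 1 ≠ 0) (m : ℕ) :
    gesselStantonMoment 1 (3 * m) x = 0 ∧ gesselStantonMoment 2 (3 * m) x = 0 := by
  have hn := add_ne_zero_of_two_mul_add_ne_zero hx
  have step₀ (n : ℕ) (h : gesselStantonMoment 2 n x = 0) :
      gesselStantonMoment 0 (n + 1) x = 0 := by
    simpa [h, hn, hx'] using gesselStantonMoment_zero_succ hx n
  have step₁ (n : ℕ) (h : gesselStantonMoment 0 n x = 0) :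
      gesselStantonMoment 1 (n + 1) x = 0 := by
    simpa [h, hn] using gesselStantonMoment_one_succ hx n
  have step₂ (n : ℕ) (h : gesselStantonMoment 1 n x = 0) :
      gesselStantonMoment 2 (n + 1) x = 0 := by
    simpa [h, hn] using gesselStantonMoment_two_succ hx n
  induction m with
  | zero => simp [gesselStantonMoment, prod_range_succ]
  | succ m ih =>
    exact ⟨step₁ _ (step₀ _ (step₂ _ ih.1)), step₂ _ (step₁ _ (step₀ _ ih.2))⟩

lemma gesselStantonMoment_zero_three_mul_succ {x : K} (hx : ∀ k : ℕ, 2 * x + k ≠ 0) (m : ℕ) :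
    4 * ((3 * m + x) * (3 * m + 1 + x) * (3 * m + 2 + x)) * (x + 1 / 2 + m) *
        gesselStantonMoment 0 (3 * (m + 1)) x =
      3 * ((3 * m + 1) * (3 * m + 2)) * ((2 * m + x) * (2 * m + 1 + x)) *
        gesselStantonMoment 0 (3 * m) x := by
  have h₀ := gesselStantonMoment_zero_succ hx (3 * m + 2)
  have h₁ := gesselStantonMoment_one_succ hx (3 * m)
  have h₂ := gesselStantonMoment_two_succ hx (3 * m + 1)
  push_cast at h₀ h₁ h₂
  rw [mul_add_one]
  linear_combination (3 * m + x) * (3 * m + 1 + x) / 3 * h₀ + (3 * m + x) / 3 * h₂ -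
    (3 * m + 2) * (6 * m + 3 + 3 * x) / 3 * h₁

lemma prod_shift_succ_mul {R : Type*} [CommRing R] (x : R) (m : ℕ) :
    (∏ i ∈ range (m + 1), (x + 2 * (m + 1 : ℕ) + i)) * ((2 * m + x) * (2 * m + 1 + x)) =
      (∏ i ∈ range m, (x + 2 * m + i)) * ((3 * m + x) * (3 * m + 1 + x) * (3 * m + 2 + x)) := by
  have hshift (i : ℕ) : x + 2 * (m + 1 : ℕ) + i = x + 2 * m + (i + 1 + 1 : ℕ) := by
    push_cast
    ring
  have h := (prod_range_succ' (fun i : ℕ ↦ x + 2 * m + i) (m + 2)).symm.trans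
    (prod_range_succ _ (m + 2))
  rw [prod_range_succ' _ (m + 1), prod_range_succ _ (m + 1),
    prod_range_succ (fun i : ℕ ↦ x + 2 * m + i) m] at h
  simp only [hshift]
  push_cast at h ⊢
  linear_combination h

lemma factorial_ratio_succ (m : ℕ) :
    ((3 * (m + 1)).factorial / (4 ^ (m + 1) * (m + 1).factorial) : K) =
      3 / 4 * ((3 * m + 1) * (3 * m + 2)) * ((3 * m).factorial / (4 ^ m * m.factorial)) := by
  have h₁ : (m + 1 : K) ≠ 0 := by norm_cast
  have h₂ : (m.factorial : K) ≠ 0 := by exact_mod_cast m.factorial_ne_zero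
  rw [mul_add_one, Nat.factorial_succ, Nat.factorial_succ, Nat.factorial_succ, Nat.factorial_succ]
  push_cast
  field_simp
  ring

lemma gesselStantonMoment_zero_mul_prod {x : K} (hx : ∀ k : ℕ, 2 * x + k ≠ 0) (m : ℕ) :
    gesselStantonMoment 0 (3 * m) x *
        ((∏ i ∈ range m, (x + 2 * m + i)) * ∏ i ∈ range m, (x + 1 / 2 + i)) =
      (3 * m).factorial / (4 ^ m * m.factorial) := by
  have hn := add_ne_zero_of_two_mul_add_ne_zero hx
  induction m with
  | zero => simp [gesselStantonMoment, gesselStantonTerm, hypTerm_zero]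
  | succ m ih =>
    have hrec := gesselStantonMoment_zero_three_mul_succ hx m
    have h₁ := hn (2 * m)
    have h₂ := hn (2 * m + 1)
    push_cast at h₁ h₂
    refine mul_left_cancel₀ (mul_ne_zero h₁ h₂) ?_
    rw [prod_range_succ (fun i : ℕ ↦ x + 1 / 2 + i), factorial_ratio_succ]
    linear_combination
      gesselStantonMoment 0 (3 * (m + 1)) x * (x + 1 / 2 + m) *
        (∏ i ∈ range m, (x + 1 / 2 + i)) * prod_shift_succ_mul x m +
      1 / 4 * (∏ i ∈ range m, (x + 2 * m + i)) * (∏ i ∈ range m, (x + 1 / 2 + i)) * hrec +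
      3 / 4 * ((3 * m + 1) * (3 * m + 2)) * ((2 * m + x) * (2 * m + 1 + x)) * ih

end HypergeometricSums

section Reduction

/-- The graph of reduction: pairs `(u / d, u / d)` of a rational number and an element of `R`,
for integers `u`, `d` with `d` invertible in `R`. -/
def reductionSubring (R : Type*) [CommRing R] : Subring (ℚ × R) where
  carrier := {z | ∃ d u : ℤ, IsUnit (d : R) ∧ (d : ℚ) * z.1 = u ∧ (d : R) * z.2 = u}
  one_mem' := ⟨1, 1, by simp, by simp, by simp⟩
  zero_mem' := ⟨1, 0, by simp, by simp, by simp⟩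
  mul_mem' := by
    rintro x y ⟨d, u, hd, hx, hx'⟩ ⟨e, v, he, hy, hy'⟩
    refine ⟨d * e, u * v, ?_, ?_, ?_⟩ <;> push_cast
    · exact hd.mul he
    · rw [← hx, ← hy, Prod.fst_mul, mul_mul_mul_comm]
    · rw [← hx', ← hy', Prod.snd_mul, mul_mul_mul_comm]
  add_mem' := by
    rintro x y ⟨d, u, hd, hx, hx'⟩ ⟨e, v, he, hy, hy'⟩
    refine ⟨d * e, e * u + d * v, ?_, ?_, ?_⟩ <;> push_cast
    · exact hd.mul he
    · rw [← hx, ← hy, Prod.fst_add]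
      ring
    · rw [← hx', ← hy', Prod.snd_add]
      ring
  neg_mem' := by
    rintro x ⟨d, u, hd, hx, hx'⟩
    exact ⟨d, -u, hd, by simp [hx], by simp [hx']⟩

variable {R : Type*} [CommRing R]

/-- The rational `x` has denominator invertible in `R`, and `a` is its image in `R`. -/
def ReducesTo (x : ℚ) (a : R) : Prop := (x, a) ∈ reductionSubring R

namespace ReducesTo

variable {x y : ℚ} {a b c : R}

lemma add (hx : ReducesTo x a) (hy : ReducesTo y b) : ReducesTo (x + y) (a + b) :=
  (reductionSubring R).add_mem hx hy

lemma sub (hx : ReducesTo x a) (hy : ReducesTo y b) : ReducesTo (x - y) (a - b) :=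
  (reductionSubring R).sub_mem hx hy

lemma neg (hx : ReducesTo x a) : ReducesTo (-x) (-a) := (reductionSubring R).neg_mem hx

lemma mul (hx : ReducesTo x a) (hy : ReducesTo y b) : ReducesTo (x * y) (a * b) :=
  (reductionSubring R).mul_mem hx hy

lemma pow (hx : ReducesTo x a) (n : ℕ) : ReducesTo (x ^ n) (a ^ n) :=
  (reductionSubring R).pow_mem hx n

lemma natCast (n : ℕ) : ReducesTo (n : ℚ) (n : R) := natCast_mem (reductionSubring R) n

lemma intCast (n : ℤ) : ReducesTo (n : ℚ) (n : R) := intCast_mem (reductionSubring R) n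

lemma ofNat (n : ℕ) [n.AtLeastTwo] : ReducesTo (ofNat(n) : ℚ) (ofNat(n) : R) :=
  ofNat_mem (reductionSubring R) n

lemma one : ReducesTo (1 : ℚ) (1 : R) := (reductionSubring R).one_mem

lemma sum {ι : Type*} {s : Finset ι} {f : ι → ℚ} {g : ι → R}
    (h : ∀ i ∈ s, ReducesTo (f i) (g i)) : ReducesTo (∑ i ∈ s, f i) (∑ i ∈ s, g i) := by
  have hpair : ∑ i ∈ s, (f i, g i) = (∑ i ∈ s, f i, ∑ i ∈ s, g i) :=
    Prod.ext Prod.fst_sum Prod.snd_sum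
  rw [ReducesTo, ← hpair]
  exact (reductionSubring R).sum_mem h

lemma prod {ι : Type*} {s : Finset ι} {f : ι → ℚ} {g : ι → R}
    (h : ∀ i ∈ s, ReducesTo (f i) (g i)) : ReducesTo (∏ i ∈ s, f i) (∏ i ∈ s, g i) := by
  have hpair : ∏ i ∈ s, (f i, g i) = (∏ i ∈ s, f i, ∏ i ∈ s, g i) :=
    Prod.ext Prod.fst_prod Prod.snd_prod
  rw [ReducesTo, ← hpair]
  exact (reductionSubring R).prod_mem h

lemma unique (hx : ReducesTo x a) (hx' : ReducesTo x b) : a = b := by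
  obtain ⟨d, u, hd, hu, hu'⟩ := hx
  obtain ⟨e, v, he, hv, hv'⟩ := hx'
  dsimp only at hu hu' hv hv'
  have hint : e * u = d * v := by
    have : (e * u : ℚ) = d * v := by rw [← hu, ← hv, mul_left_comm]
    exact_mod_cast this
  have hcast : (e * u : R) = d * v := by exact_mod_cast congrArg (Int.cast : ℤ → R) hint
  rw [← hu', ← hv', mul_left_comm] at hcast
  exact he.mul_left_cancel (hd.mul_left_cancel hcast)

lemma of_subsingleton [Subsingleton R] : ReducesTo x a :=
  ⟨x.den, x.num, isUnit_of_subsingleton _, by simp [mul_comm, Rat.mul_den_eq_num],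
    Subsingleton.elim _ _⟩

lemma ne_zero [Nontrivial R] (hx : ReducesTo x a) (ha : IsUnit a) : x ≠ 0 := by
  rintro rfl
  exact ha.ne_zero (hx.unique (by simpa using ReducesTo.natCast (R := R) 0))

lemma inv (hx : ReducesTo x a) (hb : a * b = 1) : ReducesTo x⁻¹ b := by
  nontriviality R using of_subsingleton
  have ha : IsUnit a := .of_mul_eq_one b hb
  have hx₀ : x ≠ 0 := hx.ne_zero ha
  obtain ⟨d, u, hd, hu, hu'⟩ := hx
  dsimp only at hu hu'
  refine ⟨u, d, hu' ▸ hd.mul ha, ?_, ?_⟩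
  · rw [← hu, mul_inv_cancel_right₀ hx₀]
  · rw [← hu', mul_assoc, hb, mul_one]

lemma div (hx : ReducesTo x a) (hy : ReducesTo y b) (hb : IsUnit b) (hc : b * c = a) :
    ReducesTo (x / y) c := by
  obtain ⟨b', hb'⟩ := hb.exists_right_inv
  rw [div_eq_mul_inv, show c = a * b' by rw [← hc, mul_right_comm, hb', one_mul]]
  exact hx.mul (hy.inv hb')

lemma of_mul_right (hxy : ReducesTo (x * y) a) (hy : ReducesTo y b) (hb : IsUnit b)
    (hc : b * c = a) : ReducesTo x c := by
  nontriviality R using of_subsingleton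
  rw [← mul_div_cancel_right₀ x (hy.ne_zero hb)]
  exact hxy.div hy hb hc

end ReducesTo

lemma exists_reducesTo_of_mul_recurrence {t : ℕ → ℚ} {N D : ℕ → ℤ} {n : ℕ}
    (hzero : t 0 = 1) (hsucc : ∀ k < n, t (k + 1) * D k = t k * N k)
    (hD : ∀ k < n, IsUnit (D k : R)) :
    ∃ s : ℕ → R, s 0 = 1 ∧ (∀ k < n, s (k + 1) * D k = s k * N k) ∧
      ∀ k ≤ n, ReducesTo (t k) (s k) := by
  let s (k : ℕ) : R := ∏ i ∈ range k, N i * Ring.inverse (D i : R)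
  have hs (k : ℕ) (hk : k < n) : s (k + 1) * D k = s k * N k := by
    rw [show s (k + 1) = s k * (N k * Ring.inverse (D k : R)) from prod_range_succ _ _,
      mul_assoc, mul_assoc, Ring.inverse_mul_cancel _ (hD k hk), mul_one]
  refine ⟨s, prod_range_zero _, hs, fun k hk ↦ ?_⟩
  induction k with
  | zero =>
    rw [hzero]
    exact .one
  | succ k ih =>
    nontriviality R using ReducesTo.of_subsingleton
    have hDk : (D k : ℚ) ≠ 0 := by
      have h := (hD k hk).ne_zero
      contrapose! h
      rw [Int.cast_eq_zero.1 h, Int.cast_zero]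
    rw [eq_div_of_mul_eq hDk (hsucc k hk)]
    exact ((ih (by omega)).mul (.intCast _)).div (.intCast _) (hD k hk)
      (by rw [mul_comm, hs k hk])

lemma isUnit_natCast_zmod_prime_pow {p : ℕ} (hp : p.Prime) (r : ℕ) {n : ℕ} (hn : ¬ p ∣ n) :
    IsUnit (n : ZMod (p ^ r)) :=
  (ZMod.isUnit_iff_coprime n (p ^ r)).2 (((hp.coprime_iff_not_dvd).2 hn).symm.pow_right r)

lemma ratCongr_of_reducesTo_natCast_mul {p r d : ℕ} {x y : ℚ} (hd : IsUnit (d : ZMod (p ^ r)))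
    (h : ReducesTo (d * (x - y)) (0 : ZMod (p ^ r))) : ratCongr p r x y := by
  obtain ⟨e, u, he, hu, hu'⟩ := h
  dsimp only at hu hu'
  have hdvd : ((p ^ r : ℕ) : ℤ) ∣ u := by
    rw [← ZMod.intCast_zmod_eq_zero_iff_dvd, ← hu', mul_zero]
  have hcop : IsCoprime ((p ^ r : ℕ) : ℤ) (e * d) := by
    rw [← ZMod.coe_int_isUnit_iff_isCoprime, Int.cast_mul, Int.cast_natCast]
    exact he.mul hd
  have hnum : (x - y).num * (e * d) = u * (x - y).den := by
    have : ((x - y).num * (e * d) : ℚ) = u * (x - y).den := by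
      rw [← Rat.mul_den_eq_num, ← hu]
      ring
    exact_mod_cast this
  rw [ratCongr, ← Nat.cast_pow]
  exact hcop.dvd_of_dvd_mul_right (hnum ▸ hdvd.mul_right _)

end Reduction

section Units

variable {p r : ℕ} [hprime : Fact p.Prime]

lemma isUnit_natCast_zmod_of_lt {k : ℕ} (hk₀ : k ≠ 0) (hk : k < p) :
    IsUnit (k : ZMod (p ^ r)) :=
  isUnit_natCast_zmod_prime_pow hprime.out r (Nat.not_dvd_of_pos_of_lt (Nat.pos_of_ne_zero hk₀) hk)

lemma isUnit_two_zmod (hp : 2 < p) : IsUnit (2 : ZMod (p ^ r)) := by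
  exact_mod_cast isUnit_natCast_zmod_of_lt (r := r) two_ne_zero hp

lemma isUnit_three_zmod (hp : 3 < p) : IsUnit (3 : ZMod (p ^ r)) := by
  exact_mod_cast isUnit_natCast_zmod_of_lt (r := r) three_ne_zero hp

lemma isUnit_factorial_zmod {k : ℕ} (hk : k < p) : IsUnit (k.factorial : ZMod (p ^ r)) :=
  isUnit_natCast_zmod_prime_pow hprime.out r fun h ↦
    hk.not_ge ((hprime.out.dvd_factorial).1 h)

lemma isUnit_natCast_add_one_zmod {k : ℕ} (hk : k + 1 < p) : IsUnit (k + 1 : ZMod (p ^ r)) := by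
  exact_mod_cast isUnit_natCast_zmod_of_lt (r := r) k.succ_ne_zero hk

end Units

section Deformation

variable {R : Type*} [CommRing R]

lemma eq_mul_of_mul_recurrence {x x' y y' N D N' D' u u' : R} (hD : IsUnit D) (hD' : IsUnit D')
    (hx : x' * D = x * N) (hy : y' * D' = y * N') (hu : N' * u * D = N * D' * u')
    (h : y = x * u) : y' = x' * u' := by
  refine (hD.mul hD').mul_right_cancel ?_
  linear_combination D * hy + N' * D * h + x * hu - u' * D' * hx

section Correction

variable {π d c v u h : R} (hπ : π ^ 3 = 0) (hv : d * v = 1) (hu : c * u = 1) (hh : 2 * h = 1)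
include hπ hv hu hh

lemma correction_even (s : R) :
    c * (c ^ 2 - π ^ 2) * (1 + 4 * π ^ 2 * s) * (2 * d ^ 3) =
      c ^ 3 * (2 * d * (d ^ 2 - π ^ 2)) *
        (1 + 4 * π ^ 2 * (s + h ^ 2 * (v ^ 2 - u ^ 2))) := by
  grind

lemma correction_odd (s : R) :
    c * (c - π) ^ 2 * (1 + π ^ 2 * s) * (2 * d * (2 * d - π) ^ 2) =
      (c - π) * (2 * c - π) ^ 2 * (2 * d ^ 2 * (d - π)) *
        (1 + π ^ 2 * (s + h ^ 2 * (v ^ 2 - u ^ 2))) := by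
  grind

end Correction

lemma isUnit_recurrence_denominators {π d : R} (hπ : π ^ 3 = 0) (h2 : IsUnit (2 : R))
    (hd : IsUnit d) :
    IsUnit (2 * d ^ 3) ∧ IsUnit (2 * d * (d ^ 2 - π ^ 2)) ∧ IsUnit (2 * d ^ 2 * (d - π)) ∧
      IsUnit (2 * d * (2 * d - π) ^ 2) := by
  have hnil : IsNilpotent π := ⟨3, hπ⟩
  have hsub {e : R} (he : IsUnit e) : IsUnit (e - π) :=
    sub_eq_add_neg e π ▸ hnil.neg.isUnit_add_left_of_commute he (.all _ _)
  have hadd : IsUnit (d + π) := hnil.isUnit_add_left_of_commute hd (.all _ _)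
  exact ⟨h2.mul (hd.pow 3), sq_sub_sq d π ▸ (h2.mul hd).mul (hadd.mul (hsub hd)),
    (h2.mul (hd.pow 2)).mul (hsub hd), (h2.mul hd).mul ((hsub (h2.mul hd)).pow 2)⟩

/- The same unknown `s` corrects both pairs of terms, so that `A = E - 4 * (G - M)`
up to `π ^ 3`. -/
lemma exists_corrections {π : R} (hπ : π ^ 3 = 0) (h2 : IsUnit (2 : R)) {n : ℕ}
    {A E G M : ℕ → R} (hd : ∀ k < n, IsUnit (k + 1 : R)) (hc : ∀ k < n, IsUnit (2 * k + 1 : R))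
    (hA₀ : A 0 = 1) (hE₀ : E 0 = 1) (hG₀ : G 0 = 1) (hM₀ : M 0 = 1)
    (hA : ∀ k < n, A (k + 1) * (2 * (k + 1) ^ 3) = A k * (2 * k + 1) ^ 3)
    (hE : ∀ k < n, E (k + 1) * (2 * (k + 1) * ((k + 1) ^ 2 - π ^ 2)) =
      E k * ((2 * k + 1) * ((2 * k + 1) ^ 2 - π ^ 2)))
    (hG : ∀ k < n, G (k + 1) * (2 * (k + 1) ^ 2 * ((k + 1) - π)) =
      G k * ((2 * k + 1) * ((2 * k + 1) - π) ^ 2))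
    (hM : ∀ k < n, M (k + 1) * (2 * (k + 1) * (2 * (k + 1) - π) ^ 2) =
      M k * (((2 * k + 1) - π) * (2 * (2 * k + 1) - π) ^ 2))
    (k : ℕ) (hk : k ≤ n) :
    (∃ s, E k = A k * (1 + 4 * π ^ 2 * s) ∧ G k = M k * (1 + π ^ 2 * s)) ∧ π ∣ M k - A k := by
  induction k with
  | zero => exact ⟨⟨0, by simp [hE₀, hA₀], by simp [hG₀, hM₀]⟩, by simp [hM₀, hA₀]⟩
  | succ k ih =>
    have hk' : k < n := hk
    obtain ⟨⟨s, hsE, hsG⟩, w, hsM⟩ := ih hk'.le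
    have hd' := hd k hk'
    obtain ⟨h, hh⟩ := h2.exists_right_inv
    obtain ⟨v, hv⟩ := hd'.exists_right_inv
    obtain ⟨u, hu⟩ := (hc k hk').exists_right_inv
    obtain ⟨hDA, hDE, hDG, hDM⟩ := isUnit_recurrence_denominators hπ h2 hd'
    refine ⟨⟨_, eq_mul_of_mul_recurrence hDA hDE (hA k hk') (hE k hk')
      (correction_even hπ hv hu hh s) hsE, eq_mul_of_mul_recurrence hDM hDG (hM k hk') (hG k hk')
      (correction_odd hπ hv hu hh s) hsG⟩, (((h2.pow 2).mul hDA).dvd_mul_right).1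
      ⟨w * (4 * (2 * k + 1) ^ 3) + M k * (-8 * (2 * k + 1) ^ 2 + 5 * (2 * k + 1) * π - π ^ 2) +
        M (k + 1) * (8 * (k + 1) ^ 2 - 2 * (k + 1) * π), ?_⟩⟩
    linear_combination hM k hk' - 4 * hA k hk' + 4 * (2 * k + 1) ^ 3 * hsM

end Deformation

section CentralBinomialSums

/-- The summands `C(2k,k)³ / 16ᵏ`. -/
def centralTerm (k : ℕ) : ℚ := ((2 * k).choose k : ℚ) ^ 3 / 16 ^ k

/-- The power sums `∑ kʲ C(2k,k)³ / 16ᵏ` over `k < p`. -/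
def centralSum (p j : ℕ) : ℚ := ∑ k ∈ range p, (k : ℚ) ^ j * centralTerm k

lemma centralTerm_succ_mul (k : ℕ) :
    centralTerm (k + 1) * (2 * (k + 1) ^ 3) = centralTerm k * (2 * k + 1) ^ 3 := by
  have h : ((k + 1) * (2 * (k + 1)).choose (k + 1) : ℚ) =
      2 * (2 * k + 1) * (2 * k).choose k := by
    exact_mod_cast Nat.succ_mul_centralBinom_succ k
  have h₃ := congrArg (· ^ 3) h
  simp only [mul_pow] at h₃
  unfold centralTerm
  rw [div_mul_eq_mul_div, div_mul_eq_mul_div, div_eq_div_iff (by positivity) (by positivity),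
    pow_succ]
  linear_combination 2 * 16 ^ k * h₃

lemma sum_cubic_mul_centralTerm (N : ℕ) :
    ∑ k ∈ range N, (6 * (k : ℚ) ^ 3 + 12 * (k : ℚ) ^ 2 + 6 * k + 1) * centralTerm k =
      2 * (N : ℚ) ^ 3 * centralTerm N := by
  induction N with
  | zero => simp
  | succ N ih =>
    rw [sum_range_succ, ih]
    push_cast
    linear_combination -centralTerm_succ_mul N

lemma natCast_pow_eq_zero_zmod_pow {p r s : ℕ} (hr : r ≤ s) : (p : ZMod (p ^ r)) ^ s = 0 := by
  rw [← Nat.cast_pow, ZMod.natCast_eq_zero_iff]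
  exact pow_dvd_pow p hr

variable {p r n : ℕ} [hprime : Fact p.Prime]

lemma isUnit_sixteen_pow_zmod (hp : p = 2 * n + 1) (k : ℕ) :
    IsUnit (16 ^ k : ZMod (p ^ r)) := by
  have h : ¬ p ∣ 2 := fun h ↦ by
    have := (Nat.prime_dvd_prime_iff_eq hprime.out Nat.prime_two).1 h
    omega
  have h2 := isUnit_natCast_zmod_prime_pow hprime.out r h
  rw [show (16 : ZMod (p ^ r)) = (2 : ℕ) ^ 4 by norm_num]
  exact (h2.pow 4).pow k

lemma exists_reducesTo_centralTerm (hp : p = 2 * n + 1) (k : ℕ) :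
    ∃ a : ZMod (p ^ r), ReducesTo (centralTerm k) a := by
  obtain ⟨v, hv⟩ := (isUnit_sixteen_pow_zmod (r := r) hp k).exists_right_inv
  exact ⟨((2 * k).choose k : ZMod (p ^ r)) ^ 3 * v, ((ReducesTo.natCast _).pow 3).div
    ((ReducesTo.ofNat 16).pow k) (isUnit_sixteen_pow_zmod hp k)
    (by rw [mul_left_comm, hv, mul_one])⟩

lemma reducesTo_centralTerm_zero (hp : p = 2 * n + 1) (hr : r ≤ 3) {k : ℕ} (hk : n < k)
    (hkp : k < p) : ReducesTo (centralTerm k) (0 : ZMod (p ^ r)) := by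
  have hdvd : p ∣ (2 * k).choose k := by
    have h := hprime.out.dvd_choose_add hkp hkp (by omega)
    rwa [← two_mul] at h
  obtain ⟨c, hc⟩ := hdvd
  refine ((ReducesTo.natCast _).pow 3).div ((ReducesTo.ofNat 16).pow k)
    (isUnit_sixteen_pow_zmod hp k) ?_
  rw [hc, Nat.cast_mul, mul_pow, natCast_pow_eq_zero_zmod_pow hr, zero_mul, mul_zero]

lemma reducesTo_sum_centralTerm (hp : p = 2 * n + 1) (hr : r ≤ 3) (w : ℕ → ℤ) :
    ReducesTo (∑ k ∈ range p, w k * centralTerm k - ∑ k ∈ range (n + 1), w k * centralTerm k)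
      (0 : ZMod (p ^ r)) := by
  rw [← sum_Ico_eq_sub _ (by have := hprime.out.two_le; omega : n + 1 ≤ p),
    ← sum_const_zero (s := Ico (n + 1) p)]
  refine ReducesTo.sum fun k hk ↦ ?_
  obtain ⟨hk, hkp⟩ := mem_Ico.1 hk
  simpa using (ReducesTo.intCast (w k)).mul (reducesTo_centralTerm_zero hp hr hk hkp)

lemma doubledTerm_recurrence {n k : ℕ} (hk : k < n) :
    doubledTerm ℚ n (k + 1) * (2 * (k + 1) * ((k + 1) ^ 2 - (2 * n + 1) ^ 2)) =
      doubledTerm ℚ n k * ((2 * k + 1) * ((2 * k + 1) ^ 2 - (2 * n + 1) ^ 2)) := by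
  linear_combination -2 * doubledTerm_succ_mul (K := ℚ) n k (by omega)

lemma two_mul_half_add_ne_zero (k : ℕ) : (2 * (1 / 2) + k : ℚ) ≠ 0 := by
  positivity

lemma gesselStantonTerm_half_recurrence {n k : ℕ} (hk : k < n) :
    gesselStantonTerm n (1 / 2 : ℚ) (k + 1) * (2 * (k + 1) ^ 2 * (k + 1 - (2 * n + 1))) =
      gesselStantonTerm n (1 / 2 : ℚ) k * ((2 * k + 1) * (2 * k + 1 - (2 * n + 1)) ^ 2) := by
  linear_combination -2 * gesselStantonTerm_succ_mul two_mul_half_add_ne_zero n k (by omega)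

lemma two_mul_quarter_sub_add_ne_zero (n k : ℕ) : (2 * (1 / 4 - n / 2) + k : ℚ) ≠ 0 := fun h ↦ by
  have h' : ((1 + 2 * k : ℕ) : ℚ) = (2 * n : ℕ) := by
    push_cast
    linear_combination 2 * h
  have := Nat.cast_injective h'
  omega

lemma gesselStantonTerm_quarter_recurrence {n k : ℕ} (hk : k < n) :
    gesselStantonTerm n (1 / 4 - n / 2 : ℚ) (k + 1) *
        (2 * (k + 1) * (2 * (k + 1) - (2 * n + 1)) ^ 2) =
      gesselStantonTerm n (1 / 4 - n / 2 : ℚ) k *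
        ((2 * k + 1 - (2 * n + 1)) * (2 * (2 * k + 1) - (2 * n + 1)) ^ 2) := by
  linear_combination
    -8 * gesselStantonTerm_succ_mul (two_mul_quarter_sub_add_ne_zero n) n k (by omega)

lemma exists_terms (hp : p = 2 * n + 1) (hr : r ≤ 3) :
    ∃ A E G M : ℕ → ZMod (p ^ r), ∀ k ≤ n,
      (ReducesTo (centralTerm k) (A k) ∧ ReducesTo (doubledTerm ℚ n k) (E k) ∧
        ReducesTo (gesselStantonTerm n (1 / 2) k) (G k) ∧
        ReducesTo (gesselStantonTerm n (1 / 4 - n / 2) k) (M k)) ∧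
      (∃ s, E k = A k * (1 + 4 * p ^ 2 * s) ∧ G k = M k * (1 + p ^ 2 * s)) ∧ ↑p ∣ M k - A k := by
  have h2 : IsUnit (2 : ZMod (p ^ r)) := isUnit_two_zmod (by have := hprime.out.two_le; omega)
  have hd (k : ℕ) (hk : k < n) : IsUnit (k + 1 : ZMod (p ^ r)) :=
    isUnit_natCast_add_one_zmod (by omega)
  have hc (k : ℕ) (hk : k < n) : IsUnit (2 * k + 1 : ZMod (p ^ r)) := by
    exact_mod_cast isUnit_natCast_add_one_zmod (p := p) (r := r) (k := 2 * k) (by omega)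
  have hπ : (p : ZMod (p ^ r)) ^ 3 = 0 := natCast_pow_eq_zero_zmod_pow hr
  have hpn : (p : ZMod (p ^ r)) = 2 * n + 1 := by
    rw [congrArg (Nat.cast : ℕ → ZMod (p ^ r)) hp]
    push_cast
    rfl
  have hu (k : ℕ) (hk : k < n) := isUnit_recurrence_denominators (hpn ▸ hπ) h2 (hd k hk)
  obtain ⟨A, hA₀, hA, hA'⟩ := exists_reducesTo_of_mul_recurrence (R := ZMod (p ^ r))
    (t := centralTerm) (N := fun k ↦ (2 * k + 1) ^ 3) (D := fun k ↦ 2 * (k + 1) ^ 3)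
    (by simp [centralTerm]) (fun k _ ↦ by exact_mod_cast centralTerm_succ_mul k)
    fun k hk ↦ by exact_mod_cast (hu k hk).1
  obtain ⟨E, hE₀, hE, hE'⟩ := exists_reducesTo_of_mul_recurrence (R := ZMod (p ^ r))
    (N := fun k ↦ (2 * k + 1) * ((2 * k + 1) ^ 2 - (2 * n + 1) ^ 2))
    (D := fun k ↦ 2 * (k + 1) * ((k + 1) ^ 2 - (2 * n + 1) ^ 2))
    (hypTerm_zero ..) (fun k hk ↦ by push_cast; exact doubledTerm_recurrence hk)
    fun k hk ↦ by push_cast; exact (hu k hk).2.1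
  obtain ⟨G, hG₀, hG, hG'⟩ := exists_reducesTo_of_mul_recurrence (R := ZMod (p ^ r))
    (N := fun k ↦ (2 * k + 1) * (2 * k + 1 - (2 * n + 1)) ^ 2)
    (D := fun k ↦ 2 * (k + 1) ^ 2 * (k + 1 - (2 * n + 1)))
    (hypTerm_zero ..) (fun k hk ↦ by push_cast; exact gesselStantonTerm_half_recurrence hk)
    fun k hk ↦ by push_cast; exact (hu k hk).2.2.1
  obtain ⟨M, hM₀, hM, hM'⟩ := exists_reducesTo_of_mul_recurrence (R := ZMod (p ^ r))
    (N := fun k ↦ (2 * k + 1 - (2 * n + 1)) * (2 * (2 * k + 1) - (2 * n + 1)) ^ 2)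
    (D := fun k ↦ 2 * (k + 1) * (2 * (k + 1) - (2 * n + 1)) ^ 2)
    (hypTerm_zero ..) (fun k hk ↦ by push_cast; exact gesselStantonTerm_quarter_recurrence hk)
    fun k hk ↦ by push_cast; exact (hu k hk).2.2.2
  push_cast at hA hE hG hM
  rw [← hpn] at hE hG hM
  exact ⟨A, E, G, M, fun k hk ↦ ⟨⟨hA' k hk, hE' k hk, hG' k hk, hM' k hk⟩,
    exists_corrections hπ h2 hd hc hA₀ hE₀ hG₀ hM₀ hA hE hG hM k hk⟩⟩

lemma reducesTo_cubic_centralSum (hp : p = 2 * n + 1) (hr : r ≤ 3) :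
    ReducesTo (6 * centralSum p 3 + 12 * centralSum p 2 + 6 * centralSum p 1 + centralSum p 0)
      (0 : ZMod (p ^ r)) := by
  have hsum : 6 * centralSum p 3 + 12 * centralSum p 2 + 6 * centralSum p 1 + centralSum p 0 =
      2 * (p : ℚ) ^ 3 * centralTerm p := by
    rw [← sum_cubic_mul_centralTerm]
    simp only [centralSum, mul_sum, ← sum_add_distrib]
    exact sum_congr rfl fun k _ ↦ by ring
  obtain ⟨a, ha⟩ := exists_reducesTo_centralTerm (r := r) hp p
  rw [hsum]
  have h := ((ReducesTo.ofNat 2).mul ((ReducesTo.natCast p).pow 3)).mul ha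
  rwa [natCast_pow_eq_zero_zmod_pow hr, mul_zero, zero_mul] at h

lemma reducesTo_sum_sub_sum_doubledTerm (hp : p = 2 * n + 1) (w : ℕ → ℤ) :
    ReducesTo (∑ k ∈ range p, w k * centralTerm k - ∑ k ∈ range (n + 1), w k * doubledTerm ℚ n k)
      (0 : ZMod (p ^ 2)) := by
  obtain ⟨A, E, G, M, h⟩ := exists_terms (r := 2) hp (by norm_num)
  have hdiff : ReducesTo (∑ k ∈ range (n + 1), w k * centralTerm k -
      ∑ k ∈ range (n + 1), w k * doubledTerm ℚ n k) (0 : ZMod (p ^ 2)) := by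
    rw [← sum_sub_distrib, ← sum_const_zero (s := range (n + 1))]
    refine ReducesTo.sum fun k hk ↦ ?_
    obtain ⟨⟨hA, hE, -, -⟩, ⟨s, hs, -⟩, -⟩ := h k (mem_range_succ_iff.1 hk)
    convert ((ReducesTo.intCast (w k)).mul hA).sub ((ReducesTo.intCast (w k)).mul hE) using 1
    rw [hs, natCast_pow_eq_zero_zmod_pow le_rfl]
    ring
  simpa using (reducesTo_sum_centralTerm (r := 2) hp (by norm_num) w).add hdiff

lemma sum_linear_mul_centralTerm (N : ℕ) :
    ∑ k ∈ range N, ((3 * k + 1 : ℤ) : ℚ) * centralTerm k = 3 * centralSum N 1 + centralSum N 0 := by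
  simp only [centralSum, mul_sum, ← sum_add_distrib]
  exact sum_congr rfl fun k _ ↦ by
    push_cast
    ring

lemma sum_quadratic_mul_centralTerm (N : ℕ) :
    ∑ k ∈ range N, (((3 * k + 1) * (3 * k + 2) : ℤ) : ℚ) * centralTerm k =
      9 * centralSum N 2 + 9 * centralSum N 1 + 2 * centralSum N 0 := by
  simp only [centralSum, mul_sum, ← sum_add_distrib]
  exact sum_congr rfl fun k _ ↦ by
    push_cast
    ring

lemma reducesTo_centralSum_zero_sub (hp : p = 2 * n + 1) :
    ReducesTo (centralSum p 0 - (2 * n + 1) * ∏ i ∈ range n, (3 * i + 2 : ℚ) / (3 * i + 4))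
      (0 : ZMod (p ^ 2)) := by
  simpa [centralSum, sum_doubledTerm] using reducesTo_sum_sub_sum_doubledTerm hp fun _ ↦ 1

lemma reducesTo_linear_centralSum (hp : p = 2 * n + 1) :
    ReducesTo (3 * centralSum p 1 + centralSum p 0) (p : ZMod (p ^ 2)) := by
  have h := (reducesTo_sum_sub_sum_doubledTerm hp fun k ↦ 3 * k + 1).add (.natCast p)
  rw [sum_linear_mul_centralTerm, zero_add] at h
  convert h using 1
  push_cast
  rw [sum_linear_mul_doubledTerm, hp]
  push_cast
  ring

lemma reducesTo_quadratic_centralSum_sub (hp : p = 2 * n + 1) :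
    ReducesTo (9 * centralSum p 2 + 9 * centralSum p 1 + 2 * centralSum p 0 -
      2 * (2 * n + 1) * ∏ i ∈ range n, (3 * i + 4 : ℚ) / (3 * i + 2)) (0 : ZMod (p ^ 2)) := by
  have h := reducesTo_sum_sub_sum_doubledTerm hp fun k ↦ (3 * k + 1) * (3 * k + 2)
  rw [sum_quadratic_mul_centralTerm] at h
  convert h using 2
  push_cast
  exact (sum_quadratic_mul_doubledTerm n).symm

lemma reducesTo_sum_corrected (hp : p = 2 * n + 1) (w : ℕ → ℤ) :
    ReducesTo (∑ k ∈ range p, w k * centralTerm k -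
      ∑ k ∈ range (n + 1), w k * doubledTerm ℚ n k +
      4 * (∑ k ∈ range (n + 1), w k * gesselStantonTerm n (1 / 2 : ℚ) k -
        ∑ k ∈ range (n + 1), w k * gesselStantonTerm n (1 / 4 - n / 2 : ℚ) k))
      (0 : ZMod (p ^ 3)) := by
  obtain ⟨A, E, G, M, h⟩ := exists_terms (r := 3) hp le_rfl
  have hdiff : ReducesTo (∑ k ∈ range (n + 1), w k * (centralTerm k - doubledTerm ℚ n k +
      4 * (gesselStantonTerm n (1 / 2 : ℚ) k - gesselStantonTerm n (1 / 4 - n / 2 : ℚ) k)))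
      (0 : ZMod (p ^ 3)) := by
    rw [← sum_const_zero (s := range (n + 1))]
    refine ReducesTo.sum fun k hk ↦ ?_
    obtain ⟨⟨hA, hE, hG, hM⟩, ⟨s, hsE, hsG⟩, t, hsM⟩ := h k (mem_range_succ_iff.1 hk)
    convert (ReducesTo.intCast (w k)).mul ((hA.sub hE).add ((ReducesTo.ofNat 4).mul (hG.sub hM)))
      using 1
    rw [hsE, hsG]
    linear_combination -4 * w k * p ^ 2 * s * hsM -
      4 * w k * s * t * natCast_pow_eq_zero_zmod_pow (p := p) (le_refl 3)
  have hsum := (reducesTo_sum_centralTerm (r := 3) hp le_rfl w).add hdiff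
  rw [zero_add] at hsum
  convert hsum using 1
  simp only [mul_sub, mul_add, sum_add_distrib, sum_sub_distrib, mul_sum]
  ring_nf

lemma exists_reducesTo_moment_half_sub (hp : p = 2 * n + 1) :
    ∃ d, ReducesTo (gesselStantonMoment 0 n (1 / 2 : ℚ) -
      gesselStantonMoment 0 n (1 / 4 - n / 2 : ℚ)) (p ^ 2 * d : ZMod (p ^ 3)) := by
  obtain ⟨A, E, G, M, h⟩ := exists_terms (r := 3) hp le_rfl
  choose! s hs using fun k hk ↦ (h k hk).2.1
  refine ⟨∑ k ∈ range (n + 1), M k * s k, ?_⟩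
  simp only [gesselStantonMoment, prod_range_zero, one_mul, ← sum_sub_distrib, mul_sum]
  refine ReducesTo.sum fun k hk ↦ ?_
  have hk' := mem_range_succ_iff.1 hk
  obtain ⟨⟨-, -, hG, hM⟩, -⟩ := h k hk'
  convert hG.sub hM using 1
  rw [(hs k hk').2]
  ring

lemma exists_reducesTo_moment_quarter_sub (hp : p = 2 * n + 1) :
    ∃ t, ReducesTo (gesselStantonMoment 0 n (1 / 4 - n / 2 : ℚ) - centralSum p 0)
      (p * t : ZMod (p ^ 3)) := by
  obtain ⟨A, E, G, M, h⟩ := exists_terms (r := 3) hp le_rfl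
  choose! t ht using fun k hk ↦ (h k hk).2.2
  refine ⟨∑ k ∈ range (n + 1), t k, ?_⟩
  have hdiff : ReducesTo (gesselStantonMoment 0 n (1 / 4 - n / 2 : ℚ) -
      ∑ k ∈ range (n + 1), centralTerm k) (p * ∑ k ∈ range (n + 1), t k : ZMod (p ^ 3)) := by
    simp only [gesselStantonMoment, prod_range_zero, one_mul, ← sum_sub_distrib, mul_sum]
    refine ReducesTo.sum fun k hk ↦ ?_
    have hk' := mem_range_succ_iff.1 hk
    obtain ⟨⟨hA, -, -, hM⟩, -⟩ := h k hk'
    exact ht k hk' ▸ hM.sub hA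
  have h' := hdiff.sub (reducesTo_sum_centralTerm (r := 3) hp le_rfl fun _ ↦ 1)
  simpa [centralSum] using h'

section Multiple

variable {m : ℕ} {x : ℚ} (hx : ∀ k : ℕ, 2 * x + k ≠ 0) (hx' : ∀ k : ℕ, 2 * k + 6 * x - 1 ≠ 0)
include hx hx'

lemma sum_linear_mul_gesselStantonTerm :
    ∑ k ∈ range (3 * m + 1), ((3 * k + 1 : ℤ) : ℚ) * gesselStantonTerm (3 * m) x k =
      (6 * m + 1) * gesselStantonMoment 0 (3 * m) x := by
  rw [← sub_eq_zero, ← (gesselStantonMoment_three_mul hx hx' m).1, gesselStantonMoment,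
    gesselStantonMoment, mul_sum, ← sum_sub_distrib]
  refine sum_congr rfl fun k _ ↦ ?_
  simp only [prod_range_zero, prod_range_one]
  push_cast
  ring

lemma sum_quadratic_mul_gesselStantonTerm :
    ∑ k ∈ range (3 * m + 1),
        (((3 * k + 1) * (3 * k + 2) : ℤ) : ℚ) * gesselStantonTerm (3 * m) x k =
      (6 * m + 1) * (6 * m + 2) * gesselStantonMoment 0 (3 * m) x := by
  have hmoment := gesselStantonMoment_three_mul hx hx' m
  rw [← sub_eq_zero, ← mul_zero (2 * (6 * m + 1) : ℚ), ← hmoment.1, ← sub_eq_zero, ← hmoment.2]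
  simp only [gesselStantonMoment, mul_sum, ← sum_sub_distrib]
  refine sum_congr rfl fun k _ ↦ ?_
  simp only [prod_range_succ, prod_range_zero]
  push_cast
  ring

end Multiple

lemma two_mul_add_six_mul_quarter_sub_ne_zero (n k : ℕ) :
    (2 * k + 6 * (1 / 4 - n / 2) - 1 : ℚ) ≠ 0 := fun h ↦ by
  have h' : ((4 * k + 1 : ℕ) : ℚ) = (6 * n : ℕ) := by
    push_cast
    linear_combination 2 * h
  have := Nat.cast_injective h'
  omega

lemma two_mul_add_six_mul_half_ne_zero (k : ℕ) : (2 * k + 6 * (1 / 2) - 1 : ℚ) ≠ 0 := by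
  ring_nf
  positivity

lemma reducesTo_mul_moment_sub (hp : p = 2 * n + 1) :
    ReducesTo (p * (gesselStantonMoment 0 n (1 / 2 : ℚ) -
      gesselStantonMoment 0 n (1 / 4 - n / 2 : ℚ))) (0 : ZMod (p ^ 3)) := by
  obtain ⟨d, hd⟩ := exists_reducesTo_moment_half_sub hp
  convert (ReducesTo.natCast p).mul hd using 1
  rw [← mul_assoc, ← pow_succ', natCast_pow_eq_zero_zmod_pow le_rfl, zero_mul]

section OneModThree

variable {m : ℕ} (hp : p = 6 * m + 1)
include hp

lemma reducesTo_centralSum_zero_corrected :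
    ReducesTo (centralSum p 0 - (6 * m + 1) * ∏ i ∈ range (3 * m), (3 * i + 2 : ℚ) / (3 * i + 4) +
      4 * (gesselStantonMoment 0 (3 * m) (1 / 2 : ℚ) -
        gesselStantonMoment 0 (3 * m) (1 / 4 - (3 * m : ℕ) / 2 : ℚ))) (0 : ZMod (p ^ 3)) := by
  have hp' : p = 2 * (3 * m) + 1 := by omega
  convert reducesTo_sum_corrected hp' fun _ ↦ 1 using 1
  simp only [centralSum, gesselStantonMoment, prod_range_zero, Int.cast_one, pow_zero, one_mul,
    sum_doubledTerm]
  push_cast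
  ring

lemma reducesTo_linear_centralSum_cube :
    ReducesTo (3 * centralSum p 1 + centralSum p 0) (p : ZMod (p ^ 3)) := by
  have hp' : p = 2 * (3 * m) + 1 := by omega
  have h := ((reducesTo_sum_corrected hp' fun k ↦ 3 * k + 1).add (.natCast p)).sub
    ((ReducesTo.ofNat 4).mul (reducesTo_mul_moment_sub hp'))
  rw [sum_linear_mul_centralTerm,
    sum_linear_mul_gesselStantonTerm two_mul_half_add_ne_zero two_mul_add_six_mul_half_ne_zero,
    sum_linear_mul_gesselStantonTerm (two_mul_quarter_sub_add_ne_zero _)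
      (two_mul_add_six_mul_quarter_sub_ne_zero _), mul_zero, sub_zero, zero_add] at h
  convert h using 1
  push_cast
  rw [sum_linear_mul_doubledTerm, congrArg (Nat.cast : ℕ → ℚ) hp]
  push_cast
  ring

lemma reducesTo_quadratic_centralSum_sub_cube :
    ReducesTo (9 * centralSum p 2 + 9 * centralSum p 1 + 2 * centralSum p 0 -
      2 * (6 * m + 1) * ∏ i ∈ range (3 * m), (3 * i + 4 : ℚ) / (3 * i + 2))
      (0 : ZMod (p ^ 3)) := by
  have hp' : p = 2 * (3 * m) + 1 := by omega
  have h := (reducesTo_sum_corrected hp' fun k ↦ (3 * k + 1) * (3 * k + 2)).sub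
    ((ReducesTo.natCast (4 * (p + 1))).mul (reducesTo_mul_moment_sub hp'))
  rw [sum_quadratic_mul_centralTerm,
    sum_quadratic_mul_gesselStantonTerm two_mul_half_add_ne_zero
      two_mul_add_six_mul_half_ne_zero,
    sum_quadratic_mul_gesselStantonTerm (two_mul_quarter_sub_add_ne_zero _)
      (two_mul_add_six_mul_quarter_sub_ne_zero _), mul_zero, sub_zero] at h
  convert h using 1
  push_cast
  rw [sum_quadratic_mul_doubledTerm, congrArg (Nat.cast : ℕ → ℚ) hp]
  push_cast
  ring

end OneModThree

end CentralBinomialSums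

section ShiftedFactorial

variable {R : Type*} [CommRing R]

/-- The shifted factorial `(x + 1)(x + 2) ⋯ (x + r)`, which is `r!` at `x = 0`. -/
def shiftedFactorial (r : ℕ) (x : R) : R := ∏ j ∈ range r, (j + 1 + x)

lemma shiftedFactorial_zero_left (x : R) : shiftedFactorial 0 x = 1 := prod_range_zero _

lemma shiftedFactorial_succ (r : ℕ) (x : R) :
    shiftedFactorial (r + 1) x = shiftedFactorial r x * (r + 1 + x) := prod_range_succ _ _

lemma shiftedFactorial_add (a b : ℕ) (x : R) :
    shiftedFactorial (a + b) x = shiftedFactorial a x * shiftedFactorial b (x + a) := by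
  simp only [shiftedFactorial, prod_range_add]
  refine congrArg _ (prod_congr rfl fun j _ ↦ ?_)
  push_cast
  ring

lemma shiftedFactorial_zero_right (r : ℕ) : shiftedFactorial r (0 : R) = r.factorial := by
  simp [shiftedFactorial, ← prod_range_add_one_eq_factorial]

lemma map_shiftedFactorial {S : Type*} [CommRing S] (f : R →+* S) (r : ℕ) (x : R) :
    f (shiftedFactorial r x) = shiftedFactorial r (f x) := by
  simp [shiftedFactorial]

lemma shiftedFactorial_reflect (r : ℕ) (x : R) :
    shiftedFactorial r x = (-1) ^ r * shiftedFactorial r (-(r + 1) - x) := by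
  rw [shiftedFactorial, shiftedFactorial, ← prod_range_reflect, ← card_range r, ← prod_const,
    card_range, ← prod_mul_distrib]
  refine prod_congr rfl fun j hj ↦ ?_
  rw [Nat.sub_sub, Nat.cast_sub (by have := mem_range.1 hj; omega)]
  push_cast
  ring

lemma shiftedFactorial_add_reflect (a b : ℕ) (x : R) :
    shiftedFactorial (a + b) x =
      shiftedFactorial a x * ((-1) ^ b * shiftedFactorial b (-(a + b + 1) - x)) := by
  rw [shiftedFactorial_add, shiftedFactorial_reflect b]
  ring_nf

lemma shiftedFactorial_sub_one_mul (r : ℕ) (x : R) :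
    shiftedFactorial r (x - 1) * (r + x) = shiftedFactorial r x * x := by
  induction r with
  | zero => simp [shiftedFactorial_zero_left]
  | succ r ih =>
    rw [shiftedFactorial_succ, shiftedFactorial_succ]
    push_cast
    linear_combination (r + 1 + x) * ih

lemma shiftedFactorial_two_mul (n : ℕ) {y z : R} (hz : 2 * z = 2 * y - 1) :
    shiftedFactorial (2 * n) (2 * y) =
      2 ^ (2 * n) * shiftedFactorial n y * shiftedFactorial n z := by
  induction n with
  | zero => simp [shiftedFactorial_zero_left]
  | succ n ih =>
    rw [show 2 * (n + 1) = 2 * n + 1 + 1 by ring]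
    simp only [shiftedFactorial_succ, ih]
    push_cast
    rw [show 2 * (n : R) + 1 + 2 * y = 2 * (n + 1 + z) by linear_combination -hz]
    ring

lemma shiftedFactorial_two_mul_add_one (n : ℕ) {y z : R} (hz : 2 * z = 2 * y - 1) :
    shiftedFactorial (2 * n + 1) (2 * y) =
      2 ^ (2 * n + 1) * shiftedFactorial n y * shiftedFactorial (n + 1) z := by
  rw [shiftedFactorial_succ, shiftedFactorial_two_mul n hz, shiftedFactorial_succ]
  push_cast
  rw [show 2 * (n : R) + 1 + 2 * y = 2 * (n + 1 + z) by linear_combination -hz]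
  ring

lemma factorial_three_mul_add_one (n : ℕ) {t : R} (ht : 3 * t = 1) :
    ((3 * n + 1).factorial : R) = 3 ^ (3 * n + 1) * n.factorial * shiftedFactorial n (-t) *
      shiftedFactorial (n + 1) (-2 * t) := by
  induction n with
  | zero =>
    have h : (1 : R) = 3 * (1 + -(2 * t)) := by linear_combination 2 * ht
    simpa [shiftedFactorial] using h
  | succ n ih =>
    rw [show 3 * (n + 1) + 1 = 3 * n + 1 + 1 + 1 + 1 by ring]
    simp only [Nat.factorial_succ, shiftedFactorial_succ, Nat.cast_mul] at ih ⊢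
    rw [ih]
    push_cast
    rw [show (3 * n + 1 + 1 : R) = 3 * (n + 1 - t) by linear_combination ht,
      show (3 * n + 3 + 1 : R) = 3 * (n + 1 + 1 - 2 * t) by linear_combination 2 * ht]
    ring

/-- The harmonic sum `1 + 1/2 + ⋯ + 1/r`, meaningful when `1, …, r` are invertible in `R`. -/
noncomputable def harmonicSum (R : Type*) [CommRing R] (r : ℕ) : R :=
  ∑ j ∈ range r, Ring.inverse (j + 1 : R)

lemma shiftedFactorial_of_sq_eq_zero {r : ℕ} (hr : ∀ j < r, IsUnit (j + 1 : R)) {x : R}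
    (hx : x ^ 2 = 0) :
    shiftedFactorial r x = r.factorial * (1 + x * harmonicSum R r) := by
  induction r with
  | zero => simp [shiftedFactorial, harmonicSum]
  | succ r ih =>
    have hinv := Ring.mul_inverse_cancel _ (hr r r.lt_succ_self)
    rw [shiftedFactorial_succ, ih fun j hj ↦ hr j (by omega), harmonicSum, harmonicSum,
      sum_range_succ, Nat.factorial_succ]
    push_cast
    linear_combination
      (r.factorial : R) * (∑ j ∈ range r, Ring.inverse (j + 1 : R)) * hx - r.factorial * x * hinv

lemma exists_shiftedFactorial_of_cube_eq_zero {r : ℕ} (hr : ∀ j < r, IsUnit (j + 1 : R)) :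
    ∃ a b : R, ∀ x, x ^ 3 = 0 →
      shiftedFactorial r x = r.factorial * (1 + a * x + b * x ^ 2) := by
  induction r with
  | zero => exact ⟨0, 0, fun x _ ↦ by simp [shiftedFactorial]⟩
  | succ r ih =>
    obtain ⟨a, b, hab⟩ := ih fun j hj ↦ hr j (by omega)
    obtain ⟨v, hv⟩ := (hr r r.lt_succ_self).exists_right_inv
    refine ⟨a + v, b + v * a, fun x hx ↦ ?_⟩
    rw [shiftedFactorial_succ, hab x hx, Nat.factorial_succ]
    push_cast
    linear_combination (r.factorial : R) * (b * hx - (x + a * x ^ 2) * hv)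

section Wolstenholme

open Polynomial

lemma shiftedFactorial_X_zmod (p : ℕ) [hp : Fact p.Prime] :
    shiftedFactorial (p - 1) (X : (ZMod p)[X]) = X ^ (p - 1) - 1 := by
  have hp₁ : p - 1 ≠ 0 := by have := hp.out.two_le; omega
  have hmonic : (shiftedFactorial (p - 1) (X : (ZMod p)[X])).Monic :=
    monic_prod_of_monic _ _ fun j _ ↦ by
      rw [add_comm]
      exact_mod_cast monic_X_add_C (j + 1 : ZMod p)
  have hdeg : (shiftedFactorial (p - 1) (X : (ZMod p)[X])).degree = (p - 1 : ℕ) := by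
    have hfactor (j : ℕ) : ((j : (ZMod p)[X]) + 1 + X).degree = 1 := by
      rw [add_comm]
      exact_mod_cast degree_X_add_C (j + 1 : ZMod p)
    simp [shiftedFactorial, degree_prod, hfactor]
  refine eq_of_degree_sub_lt_of_eval_finset_eq (univ.erase 0) ?_ fun x hx ↦ ?_
  · rw [card_erase_of_mem (mem_univ _), card_univ, ZMod.card, ← hdeg]
    refine degree_sub_lt_left ?_ hmonic.ne_zero ?_
    · rw [hdeg, ← C_1, degree_X_pow_sub_C (Nat.pos_of_ne_zero hp₁)]
    · rw [hmonic.leadingCoeff, ← C_1, leadingCoeff_X_pow_sub_C (Nat.pos_of_ne_zero hp₁)]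
  · have hx₀ : x ≠ 0 := (mem_erase.1 hx).1
    have hval : (-x).val ≠ 0 := by simpa [ZMod.val_eq_zero] using hx₀
    have hlt := ZMod.val_lt (-x)
    rw [eval_sub, eval_pow, eval_X, eval_one, ZMod.pow_card_sub_one_eq_one hx₀, sub_self,
      ← coe_evalRingHom, map_shiftedFactorial, coe_evalRingHom, eval_X]
    refine prod_eq_zero (mem_range.2 (by omega : (-x).val - 1 < p - 1)) ?_
    rw [← Nat.cast_add_one, Nat.sub_add_cancel (Nat.pos_of_ne_zero hval), ZMod.natCast_zmod_val,
      neg_add_cancel]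

lemma dvd_coeff_shiftedFactorial_X {p : ℕ} [Fact p.Prime] {i : ℕ} (hi : i ≠ 0) (hip : i < p - 1) :
    (p : ℤ) ∣ (shiftedFactorial (p - 1) (X : ℤ[X])).coeff i := by
  rw [← ZMod.intCast_zmod_eq_zero_iff_dvd, ← eq_intCast (Int.castRingHom (ZMod p)),
    ← coeff_map, ← coe_mapRingHom, map_shiftedFactorial, coe_mapRingHom, map_X,
    shiftedFactorial_X_zmod, coeff_sub, coeff_X_pow, coeff_one, if_neg hip.ne, if_neg hi, sub_zero]

lemma aeval_of_cube_eq_zero (P : ℤ[X]) {x : R} (hx : x ^ 3 = 0) :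
    aeval x P = P.coeff 0 + P.coeff 1 * x + P.coeff 2 * x ^ 2 := by
  have h := congrArg (aeval x) P.divX_mul_X_add
  rw [← P.divX.divX_mul_X_add, ← P.divX.divX.divX_mul_X_add] at h
  simp only [map_add, map_mul, aeval_X, coeff_divX, eq_intCast, map_intCast] at h
  linear_combination -h + aeval x P.divX.divX.divX * hx

lemma shiftedFactorial_prime_sub_one {p : ℕ} [hp : Fact p.Prime] (hp₃ : 3 < p)
    (hπ : (p : R) ^ 3 = 0) (c : R) :
    shiftedFactorial (p - 1) (c * p) = ((p - 1).factorial : R) := by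
  obtain ⟨u, hu⟩ := dvd_coeff_shiftedFactorial_X (p := p) two_ne_zero (by omega)
  set P := shiftedFactorial (p - 1) (X : ℤ[X])
  have heval (c : R) : shiftedFactorial (p - 1) (c * p) =
      P.coeff 0 + c * (p * P.coeff 1) + c ^ 2 * (p ^ 2 * P.coeff 2) := by
    have hP := aeval_of_cube_eq_zero P (x := c * p) (by rw [mul_pow, hπ, mul_zero])
    rw [← AlgHom.coe_toRingHom, map_shiftedFactorial, AlgHom.coe_toRingHom, aeval_X] at hP
    rw [hP]
    ring
  have hquad : (p : R) ^ 2 * P.coeff 2 = 0 := by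
    rw [hu]
    push_cast
    linear_combination u * hπ
  have hlin : (p : R) * P.coeff 1 = 0 := by
    have hreflect := shiftedFactorial_reflect (p - 1) (0 * p : R)
    rw [(hp.out.even_sub_one (by omega)).neg_one_pow, one_mul, Nat.cast_pred hp.out.pos,
      show (-(p - 1 + 1) - 0 * p : R) = -1 * p by ring, heval, heval, hquad] at hreflect
    linear_combination hreflect
  rw [← shiftedFactorial_zero_right, ← zero_mul (p : R), heval, heval, hquad, hlin]
  ring

end Wolstenholme

end ShiftedFactorial

lemma ReducesTo.shiftedFactorial {R : Type*} [CommRing R] {x : ℚ} {a : R} (hx : ReducesTo x a)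
    (r : ℕ) : ReducesTo (shiftedFactorial r x) (shiftedFactorial r a) :=
  .prod fun j _ ↦ ((ReducesTo.natCast j).add .one).add hx

lemma prod_ratio_inv (n : ℕ) :
    ∏ i ∈ range n, (3 * i + 2 : ℚ) / (3 * i + 4) =
      (∏ i ∈ range n, (3 * i + 4 : ℚ) / (3 * i + 2))⁻¹ := by
  simp

lemma prod_ratio_ne_zero (n : ℕ) : ∏ i ∈ range n, (3 * i + 4 : ℚ) / (3 * i + 2) ≠ 0 := by
  positivity

lemma shiftedFactorial_neg_third_ne_zero (n : ℕ) : shiftedFactorial n (-(1 / 3) : ℚ) ≠ 0 := by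
  refine prod_ne_zero_iff.2 fun i _ ↦ ?_
  rw [show (i + 1 + -(1 / 3) : ℚ) = i + 2 / 3 by ring]
  positivity

lemma prod_ratio_mul_shiftedFactorial (n : ℕ) :
    (∏ i ∈ range n, (3 * i + 4 : ℚ) / (3 * i + 2)) * shiftedFactorial n (-(1 / 3)) =
      shiftedFactorial n (1 / 3) := by
  rw [shiftedFactorial, shiftedFactorial, ← prod_mul_distrib]
  refine prod_congr rfl fun i _ ↦ ?_
  have h : (3 * i + 2 : ℚ) ≠ 0 := by positivity
  field_simp
  ring

lemma shiftedFactorial_duplication {R : Type*} [CommRing R] {p m : ℕ} (hp : p = 6 * m + 5) {h : R}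
    (hh : 2 * h = 1) (c : R) :
    shiftedFactorial (2 * m + 1) (2 * c * (p : R)) *
        shiftedFactorial (2 * m + 1) ((-h - c) * (p : R)) =
      2 ^ (2 * m + 1) * (-1) ^ (m + 1) * shiftedFactorial m (c * (p : R)) *
        shiftedFactorial (3 * m + 2) ((-h - c) * (p : R)) := by
  have hpm : (p : R) = 6 * m + 5 := by exact_mod_cast congrArg Nat.cast hp
  have hdup := shiftedFactorial_two_mul_add_one m (y := c * (p : R)) (z := c * p - h)
    (by linear_combination -hh)
  have hadd := shiftedFactorial_add (2 * m + 1) (m + 1) ((-h - c) * (p : R))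
  rw [shiftedFactorial_reflect (m + 1), show -(((m + 1 : ℕ) : R) + 1) - (c * p - h) =
    (-h - c) * p + (2 * m + 1 : ℕ) by rw [hpm]; push_cast; linear_combination (3 * m + 3) * hh]
    at hdup
  rw [show 2 * m + 1 + (m + 1) = 3 * m + 2 by ring] at hadd
  rw [hadd, mul_assoc 2, hdup]
  ring

section PrimeSquare

variable {p : ℕ} [hprime : Fact p.Prime]

lemma shiftedFactorial_mul_prime {k : ℕ} (hk : k < p) (c : ZMod (p ^ 2)) :
    shiftedFactorial k (c * (p : ZMod (p ^ 2))) =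
      (k.factorial : ZMod (p ^ 2)) *
        (1 + c * (p : ZMod (p ^ 2)) * harmonicSum (ZMod (p ^ 2)) k) := by
  refine shiftedFactorial_of_sq_eq_zero (fun j hj ↦ isUnit_natCast_add_one_zmod (by omega)) ?_
  rw [mul_pow, natCast_pow_eq_zero_zmod_pow le_rfl, mul_zero]

lemma factorial_prime_sub_one_zmod_sq {n : ℕ} (hp : p = 2 * n + 1) :
    ((p - 1).factorial : ZMod (p ^ 2)) =
      (-1) ^ n * (n.factorial : ZMod (p ^ 2)) ^ 2 *
        (1 - (p : ZMod (p ^ 2)) * harmonicSum (ZMod (p ^ 2)) n) := by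
  have hpn : (p : ZMod (p ^ 2)) = 2 * n + 1 := by exact_mod_cast congrArg Nat.cast hp
  have h := shiftedFactorial_add_reflect n n (0 : ZMod (p ^ 2))
  rw [shiftedFactorial_zero_right, shiftedFactorial_zero_right,
    show (-(n + n + 1) - 0 : ZMod (p ^ 2)) = -1 * (p : ZMod (p ^ 2)) by rw [hpn]; ring,
    shiftedFactorial_mul_prime (by omega), show n + n = p - 1 by omega] at h
  rw [h]
  ring

lemma two_pow_prime_sub_one_zmod_sq {n : ℕ} (hp : p = 2 * n + 1) {h : ZMod (p ^ 2)}
    (hh : 2 * h = 1) :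
    (2 : ZMod (p ^ 2)) ^ (p - 1) = 1 - h * (p : ZMod (p ^ 2)) * harmonicSum (ZMod (p ^ 2)) n := by
  have hpn : (p : ZMod (p ^ 2)) = 2 * n + 1 := by exact_mod_cast congrArg Nat.cast hp
  have hπ : (p : ZMod (p ^ 2)) ^ 2 = 0 := natCast_pow_eq_zero_zmod_pow le_rfl
  have hdup := shiftedFactorial_two_mul n (y := 0) (z := -h) (by linear_combination -hh)
  rw [mul_zero, shiftedFactorial_zero_right, shiftedFactorial_zero_right,
    shiftedFactorial_reflect n (-h),
    show -(n + 1) - -h = -h * (p : ZMod (p ^ 2)) by rw [hpn]; linear_combination (n + 1) * hh,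
    shiftedFactorial_mul_prime (by omega), show 2 * n = p - 1 by omega,
    factorial_prime_sub_one_zmod_sq hp] at hdup
  set H := harmonicSum (ZMod (p ^ 2)) n
  have hunit : IsUnit ((-1) ^ n * (n.factorial : ZMod (p ^ 2)) ^ 2) :=
    (isUnit_one.neg.pow n).mul ((isUnit_factorial_zmod (by omega)).pow 2)
  have hcancel : 1 - p * H = 2 ^ (p - 1) * (1 - h * p * H) := by
    refine hunit.mul_left_cancel ?_
    rw [hdup]
    ring
  linear_combination -(1 + h * p * H) * hcancel +
    (2 ^ (p - 1) * h ^ 2 * H ^ 2 - h * H ^ 2) * hπ + p * H * hh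

end PrimeSquare

section TwoModThree

variable {p m : ℕ} [hprime : Fact p.Prime] (hp : p = 6 * m + 5)
include hp

lemma three_pow_prime_sub_one_zmod_sq {t : ZMod (p ^ 2)} (ht : 3 * t = 1) :
    (3 : ZMod (p ^ 2)) ^ (p - 1) =
      1 - 2 * t * (p : ZMod (p ^ 2)) * harmonicSum (ZMod (p ^ 2)) (2 * m + 1) := by
  have hpm : (p : ZMod (p ^ 2)) = 6 * m + 5 := by exact_mod_cast congrArg Nat.cast hp
  have htriple := factorial_three_mul_add_one (2 * m + 1) ht
  have hadd := shiftedFactorial_add (2 * m + 1) (2 * m + 2) (-2 * t * (p : ZMod (p ^ 2)))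
  have hsplit := shiftedFactorial_add_reflect (4 * m + 3) (2 * m + 1) (-2 * t * (p : ZMod (p ^ 2)))
  have hpos := shiftedFactorial_mul_prime (show 2 * m + 1 < p by omega) (-2 * t)
  have hodd : (-1 : ZMod (p ^ 2)) ^ (2 * m + 1) = -1 := Odd.neg_one_pow ⟨m, rfl⟩
  have heven : (-1 : ZMod (p ^ 2)) ^ (2 * m + 1 + 1) = 1 := Even.neg_one_pow ⟨m + 1, by ring⟩
  rw [shiftedFactorial_reflect _ (-t), shiftedFactorial_reflect _ (-2 * t), hodd, heven,
    show 3 * (2 * m + 1) + 1 = p - 1 by omega] at htriple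
  rw [show 4 * m + 3 + (2 * m + 1) = p - 1 by omega,
    shiftedFactorial_prime_sub_one (by omega) (natCast_pow_eq_zero_zmod_pow (by norm_num)), hodd,
    show 4 * m + 3 = 2 * m + 1 + (2 * m + 2) by ring, hadd] at hsplit
  push_cast at htriple hsplit
  have hthird : -(2 * m + 1 + 1) - -t = -t * (p : ZMod (p ^ 2)) := by
    rw [hpm]; linear_combination (2 * m + 2) * ht
  have htwo_thirds : -(2 * m + 1 + 1 + 1) - -2 * t = -2 * t * p + (2 * m + 1 : ZMod (p ^ 2)) := by
    rw [hpm]; linear_combination (4 * m + 4) * ht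
  have hcomplement : -(2 * m + 1 + (2 * m + 2) + (2 * m + 1) + 1) - -2 * t * p =
      -t * (p : ZMod (p ^ 2)) := by
    rw [hpm]; linear_combination (6 * m + 5) * ht
  rw [hthird, htwo_thirds] at htriple
  rw [hcomplement] at hsplit
  have hcancel : shiftedFactorial (2 * m + 1) (-2 * t * (p : ZMod (p ^ 2))) =
      3 ^ (p - 1) * ((2 * m + 1).factorial : ZMod (p ^ 2)) := by
    refine (isUnit_factorial_zmod (show p - 1 < p by omega)).mul_left_cancel ?_
    linear_combination shiftedFactorial (2 * m + 1) (-2 * t * (p : ZMod (p ^ 2))) * htriple -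
      3 ^ (p - 1) * ((2 * m + 1).factorial : ZMod (p ^ 2)) * hsplit
  refine (isUnit_factorial_zmod (show 2 * m + 1 < p by omega)).mul_left_cancel ?_
  linear_combination hpos - hcancel

lemma prime_mul_harmonicSum_relation :
    (p : ZMod (p ^ 2)) * (harmonicSum (ZMod (p ^ 2)) (2 * m + 1) +
      harmonicSum (ZMod (p ^ 2)) (3 * m + 2) - harmonicSum (ZMod (p ^ 2)) m) = 0 := by
  obtain ⟨h, hh⟩ := (isUnit_two_zmod (p := p) (r := 2) (by omega)).exists_right_inv
  have hπ : (p : ZMod (p ^ 2)) ^ 2 = 0 := natCast_pow_eq_zero_zmod_pow le_rfl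
  have hdup (c : ZMod (p ^ 2)) := shiftedFactorial_duplication hp hh c
  simp only [shiftedFactorial_mul_prime (show 2 * m + 1 < p by omega),
    shiftedFactorial_mul_prime (show m < p by omega),
    shiftedFactorial_mul_prime (show 3 * m + 2 < p by omega)] at hdup
  refine ((isUnit_factorial_zmod (show 2 * m + 1 < p by omega)).pow 2).mul_left_cancel ?_
  have h₀ := hdup 0
  have h₁ := hdup 1
  generalize harmonicSum (ZMod (p ^ 2)) (2 * m + 1) = a at *
  generalize harmonicSum (ZMod (p ^ 2)) (3 * m + 2) = g at *
  generalize harmonicSum (ZMod (p ^ 2)) m = b at *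
  generalize (2 : ZMod (p ^ 2)) ^ (2 * m + 1) * (-1) ^ (m + 1) = K at *
  generalize ((2 * m + 1).factorial : ZMod (p ^ 2)) = f at *
  generalize (m.factorial : ZMod (p ^ 2)) = k at *
  generalize ((3 * m + 2).factorial : ZMod (p ^ 2)) = N at *
  linear_combination h₁ - (1 + p * (b - g)) * h₀ +
    (f ^ 2 * h * a * (2 * a + g - b) + 2 * f ^ 2 * a ^ 2 - h * g ^ 2 * K * k * N -
      g * b * K * k * N) * hπ

end TwoModThree

lemma prod_ratio_mul_shiftedFactorial_sq (m : ℕ) {q : ℚ} (hq : q = 6 * m + 5) :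
    (2 * q * ∏ i ∈ range (3 * m + 2), (3 * i + 4 : ℚ) / (3 * i + 2)) *
        (shiftedFactorial (2 * m + 2) (-(q / 3)) ^ 2 * shiftedFactorial m (q / 3)) =
      -2 * shiftedFactorial (5 * m + 4) (-(q / 3)) := by
  have hratio := prod_ratio_mul_shiftedFactorial (3 * m + 2)
  have hadd := shiftedFactorial_add (2 * m + 2) (3 * m + 2) (-(q / 3))
  have hadd' := shiftedFactorial_add (2 * m + 2) m (-(1 / 3) : ℚ)
  have hreflect := shiftedFactorial_reflect (2 * m + 2) (-(1 / 3) : ℚ)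
  have hshift := shiftedFactorial_sub_one_mul (2 * m + 2) (-(q / 3))
  rw [show 2 * m + 2 + (3 * m + 2) = 5 * m + 4 by ring,
    show -(q / 3) + (2 * m + 2 : ℕ) = 1 / 3 by rw [hq]; push_cast; ring] at hadd
  rw [show 2 * m + 2 + m = 3 * m + 2 by ring,
    show (-(1 / 3) + (2 * m + 2 : ℕ) : ℚ) = q / 3 by rw [hq]; push_cast; ring] at hadd'
  rw [Even.neg_one_pow ⟨m + 1, by ring⟩, one_mul,
    show -((2 * m + 2 : ℕ) + 1) - -(1 / 3) = -(q / 3) - 1 by rw [hq]; push_cast; ring] at hreflect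
  rw [← hreflect, show (2 * m + 2 : ℕ) + -(q / 3) = 1 / 3 by rw [hq]; push_cast; ring] at hshift
  refine mul_right_cancel₀ (shiftedFactorial_neg_third_ne_zero (3 * m + 2)) ?_
  rw [hadd'] at hratio ⊢
  set F := shiftedFactorial (2 * m + 2) (-(q / 3))
  linear_combination 2 * q * F ^ 2 * shiftedFactorial m (q / 3) * hratio +
    2 * shiftedFactorial (2 * m + 2) (-(1 / 3)) * shiftedFactorial m (q / 3) * hadd +
    6 * F * shiftedFactorial m (q / 3) * shiftedFactorial (3 * m + 2) (1 / 3) * hshift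

section Congruences

variable {p r n : ℕ}

lemma reducesTo_nine_mul_centralSum_two {S Q : ZMod (p ^ r)} (hzero : ReducesTo (centralSum p 0) S)
    (hlin : ReducesTo (3 * centralSum p 1 + centralSum p 0) (p : ZMod (p ^ r)))
    (hquad : ReducesTo (9 * centralSum p 2 + 9 * centralSum p 1 + 2 * centralSum p 0) Q) :
    ReducesTo (9 * centralSum p 2) (Q - 3 * p + S) := by
  convert (hquad.sub ((ReducesTo.ofNat 3).mul hlin)).add hzero using 1
  ring

lemma reducesTo_eighteen_mul_centralSum_three [Fact p.Prime] (hp : p = 2 * n + 1) (hr : r ≤ 3)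
    {S Q : ZMod (p ^ r)} (hzero : ReducesTo (centralSum p 0) S)
    (hlin : ReducesTo (3 * centralSum p 1 + centralSum p 0) (p : ZMod (p ^ r)))
    (hquad : ReducesTo (9 * centralSum p 2 + 9 * centralSum p 1 + 2 * centralSum p 0) Q) :
    ReducesTo (18 * centralSum p 3) (6 * p - 4 * Q - S) := by
  convert ((((ReducesTo.ofNat 3).mul (reducesTo_cubic_centralSum hp hr)).add
    ((ReducesTo.ofNat 6).mul hlin)).sub ((ReducesTo.ofNat 4).mul hquad)).sub hzero using 1 <;> ring

end Congruences

lemma choose_mul_factorial_mul_factorial_of_eq {R : Type*} [CommRing R] {p m : ℕ}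
    (hp : p = 6 * m + 5) {t : R} (ht : 3 * t = 1) :
    ((3 * m + 2).choose m : R) * m.factorial * (t * (1 + p) * (2 * m + 1).factorial) =
      ((3 * m + 2).factorial : R) := by
  have hpm : (p : R) = 6 * m + 5 := by exact_mod_cast congrArg Nat.cast hp
  have hchoose := Nat.choose_mul_factorial_mul_factorial (n := 3 * m + 2) (k := m) (by omega)
  rw [show 3 * m + 2 - m = 2 * m + 1 + 1 by omega, Nat.factorial_succ] at hchoose
  rw [← hchoose, hpm]
  push_cast
  linear_combination ((3 * m + 2).choose m : R) * m.factorial *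
    (2 * m + 1).factorial * (2 * m + 2) * ht

section PrimeSquare

variable {p m : ℕ} [hprime : Fact p.Prime]

lemma isUnit_shiftedFactorial_mul_prime {k : ℕ} (hk : k < p) (c : ZMod (p ^ 2)) :
    IsUnit (shiftedFactorial k (c * (p : ZMod (p ^ 2)))) := by
  have hπ : (p : ZMod (p ^ 2)) ^ 2 = 0 := natCast_pow_eq_zero_zmod_pow le_rfl
  rw [shiftedFactorial_mul_prime hk]
  refine (isUnit_factorial_zmod hk).mul (.of_mul_eq_one (1 - c * p * harmonicSum _ k) ?_)
  linear_combination -(c * harmonicSum _ k) ^ 2 * hπ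

variable (hp : p = 6 * m + 5)
include hp

lemma shiftedFactorial_five_mul_add_four_mul {t : ZMod (p ^ 2)} (ht : 3 * t = 1) :
    shiftedFactorial (5 * m + 4) (-t * (p : ZMod (p ^ 2))) *
        shiftedFactorial m (-2 * t * (p : ZMod (p ^ 2))) =
      ((3 * m + 2).factorial : ZMod (p ^ 2)) ^ 2 *
        (1 - (p : ZMod (p ^ 2)) * harmonicSum (ZMod (p ^ 2)) (3 * m + 2)) := by
  have hpm : (p : ZMod (p ^ 2)) = 6 * m + 5 := by exact_mod_cast congrArg Nat.cast hp
  have hsplit := shiftedFactorial_add_reflect (5 * m + 4) m (-t * (p : ZMod (p ^ 2)))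
  have hsign : (-1 : ZMod (p ^ 2)) ^ m * (-1) ^ m = 1 := by rw [← mul_pow]; simp
  rw [show 5 * m + 4 + m = p - 1 by omega,
    shiftedFactorial_prime_sub_one (by omega) (natCast_pow_eq_zero_zmod_pow (by norm_num)),
    factorial_prime_sub_one_zmod_sq (n := 3 * m + 2) (by omega),
    show -((5 * m + 4 : ℕ) + m + 1) - -t * (p : ZMod (p ^ 2)) = -2 * t * p by
      rw [hpm]; push_cast; linear_combination (6 * m + 5) * ht,
    show (-1 : ZMod (p ^ 2)) ^ (3 * m + 2) = (-1) ^ m by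
      rw [show 3 * m + 2 = m + 2 * (m + 1) by ring, pow_add, pow_mul (-1) 2]; simp] at hsplit
  linear_combination -(-1) ^ m * hsplit + (((3 * m + 2).factorial : ZMod (p ^ 2)) ^ 2 *
    (1 - p * harmonicSum (ZMod (p ^ 2)) (3 * m + 2)) - shiftedFactorial (5 * m + 4) (-t * p) *
      shiftedFactorial m (-2 * t * p)) * hsign

lemma fermatQuotient_factor_mul {t h : ZMod (p ^ 2)} (ht : 3 * t = 1) (hh : 2 * h = 1) :
    (1 + 2 * (p : ZMod (p ^ 2)) + 4 * t * (2 ^ (p - 1) - 1) - 3 * h * (3 ^ (p - 1) - 1)) *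
        (1 - t * (p : ZMod (p ^ 2)) * (2 * harmonicSum (ZMod (p ^ 2)) (2 * m + 1) +
          harmonicSum (ZMod (p ^ 2)) m)) =
      (1 + (p : ZMod (p ^ 2))) ^ 2 *
        (1 - (p : ZMod (p ^ 2)) * harmonicSum (ZMod (p ^ 2)) (3 * m + 2)) := by
  have hπ : (p : ZMod (p ^ 2)) ^ 2 = 0 := natCast_pow_eq_zero_zmod_pow le_rfl
  have hrel := prime_mul_harmonicSum_relation hp
  rw [two_pow_prime_sub_one_zmod_sq (n := 3 * m + 2) (by omega) hh,
    three_pow_prime_sub_one_zmod_sq hp ht]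
  grind

lemma shiftedFactorial_five_mul_add_four {t h : ZMod (p ^ 2)} (ht : 3 * t = 1)
    (hh : 2 * h = 1) :
    shiftedFactorial (5 * m + 4) (-t * (p : ZMod (p ^ 2))) =
      shiftedFactorial (2 * m + 2) (-t * (p : ZMod (p ^ 2))) ^ 2 *
        shiftedFactorial m (t * (p : ZMod (p ^ 2))) *
        ((1 + 2 * (p : ZMod (p ^ 2)) + 4 * t * (2 ^ (p - 1) - 1) - 3 * h * (3 ^ (p - 1) - 1)) *
          ((3 * m + 2).choose m : ZMod (p ^ 2)) ^ 2) := by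
  have hpm : (p : ZMod (p ^ 2)) = 6 * m + 5 := by exact_mod_cast congrArg Nat.cast hp
  have hπ : (p : ZMod (p ^ 2)) ^ 2 = 0 := natCast_pow_eq_zero_zmod_pow le_rfl
  have hfactor := fermatQuotient_factor_mul hp ht hh
  have hfive := shiftedFactorial_five_mul_add_four_mul hp ht
  rw [← choose_mul_factorial_mul_factorial_of_eq hp ht] at hfive
  rw [show 2 * m + 2 = 2 * m + 1 + 1 by ring, shiftedFactorial_succ (2 * m + 1),
    show (2 * m + 1 : ℕ) + 1 + -t * (p : ZMod (p ^ 2)) = t by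
      rw [hpm]; push_cast; linear_combination -(2 * m + 2) * ht,
    shiftedFactorial_mul_prime (show 2 * m + 1 < p by omega),
    shiftedFactorial_mul_prime (show m < p by omega)]
  refine (isUnit_shiftedFactorial_mul_prime (show m < p by omega) (-2 * t)).mul_right_cancel ?_
  rw [hfive, shiftedFactorial_mul_prime (show m < p by omega)]
  generalize harmonicSum (ZMod (p ^ 2)) (2 * m + 1) = a at *
  generalize harmonicSum (ZMod (p ^ 2)) m = b at *
  generalize 1 + 2 * (p : ZMod (p ^ 2)) + 4 * t * (2 ^ (p - 1) - 1) -
    3 * h * (3 ^ (p - 1) - 1) = Q at *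
  linear_combination
    -((3 * m + 2).choose m * m.factorial * t * (2 * m + 1).factorial) ^ 2 * (hfactor +
      Q * (t ^ 2 * (a ^ 2 - 2 * b ^ 2 + 2 * a * b) + p * t ^ 3 * (4 * a * b ^ 2 - a ^ 2 * b) -
        2 * t ^ 4 * p ^ 2 * a ^ 2 * b ^ 2) * hπ)

lemma exists_reducesTo_R3 : ∃ ρ : ZMod (p ^ 2), IsUnit ρ ∧ ReducesTo (R3 p) ρ ∧
    ReducesTo (2 * p * ∏ i ∈ range (3 * m + 2), (3 * i + 4 : ℚ) / (3 * i + 2)) (-2 * ρ) := by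
  have h2 : IsUnit (2 : ZMod (p ^ 2)) := isUnit_two_zmod (by omega)
  have h3 : IsUnit (3 : ZMod (p ^ 2)) := isUnit_three_zmod (by omega)
  obtain ⟨h, hh⟩ := h2.exists_right_inv
  obtain ⟨t, ht⟩ := h3.exists_right_inv
  have hfive := shiftedFactorial_five_mul_add_four hp ht hh
  set ρ : ZMod (p ^ 2) := (1 + 2 * (p : ZMod (p ^ 2)) + 4 * t * (2 ^ (p - 1) - 1) -
    3 * h * (3 ^ (p - 1) - 1)) * ((3 * m + 2).choose m : ZMod (p ^ 2)) ^ 2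
  have hunit : IsUnit (shiftedFactorial (2 * m + 2) (-t * (p : ZMod (p ^ 2))) ^ 2 *
      shiftedFactorial m (t * (p : ZMod (p ^ 2)))) :=
    ((isUnit_shiftedFactorial_mul_prime (by omega) _).pow 2).mul
      (isUnit_shiftedFactorial_mul_prime (by omega) _)
  refine ⟨ρ, ?_, ?_, ?_⟩
  · exact isUnit_of_mul_isUnit_right (hfive ▸ isUnit_shiftedFactorial_mul_prime (by omega) _)
  · rw [R3, show (p - 1) / 2 = 3 * m + 2 by omega, show p / 6 = m by omega]
    have h43 : ReducesTo (4 / 3) (4 * t) :=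
      (ReducesTo.ofNat 4).div (.ofNat 3) h3 (by linear_combination 4 * ht)
    have h32 : ReducesTo (3 / 2) (3 * h) :=
      (ReducesTo.ofNat 3).div (.ofNat 2) h2 (by linear_combination 3 * hh)
    exact (((ReducesTo.one.add ((ReducesTo.ofNat 2).mul (.natCast p))).add
      (h43.mul (((ReducesTo.ofNat 2).pow _).sub .one))).sub
      (h32.mul (((ReducesTo.ofNat 3).pow _).sub .one))).mul ((ReducesTo.natCast _).pow 2)
  · have hthird : ReducesTo (p / 3) (t * (p : ZMod (p ^ 2))) :=
      (ReducesTo.natCast p).div (.ofNat 3) h3 (by linear_combination p * ht)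
    have hden := ((hthird.neg.shiftedFactorial (2 * m + 2)).pow 2).mul (hthird.shiftedFactorial m)
    have hnum := (ReducesTo.ofNat 2).neg.mul (hthird.neg.shiftedFactorial (5 * m + 4))
    rw [← neg_mul t] at hden hnum
    refine .of_mul_right ?_ hden hunit ?_ (a := -2 * shiftedFactorial (5 * m + 4) (-t * p))
    · rw [prod_ratio_mul_shiftedFactorial_sq m (by rw [hp]; push_cast; ring)]
      exact hnum
    · rw [hfive]
      ring

lemma reducesTo_centralSum_zero : ReducesTo (centralSum p 0) (0 : ZMod (p ^ 2)) := by
  obtain ⟨ρ, hρ, -, hprod⟩ := exists_reducesTo_R3 hp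
  have h2 : IsUnit (2 : ZMod (p ^ 2)) := isUnit_two_zmod (by omega)
  have hzero := reducesTo_centralSum_zero_sub (p := p) (n := 3 * m + 2) (by omega)
  have hsq : ReducesTo (2 * p ^ 2) (0 : ZMod (p ^ 2)) := by
    convert (ReducesTo.ofNat 2).mul ((ReducesTo.natCast p).pow 2) using 1
    rw [natCast_pow_eq_zero_zmod_pow le_rfl, mul_zero]
  convert hzero.add (hsq.div hprod (h2.neg.mul hρ) (mul_zero _)) using 1
  · rw [prod_ratio_inv]
    have hne := prod_ratio_ne_zero (3 * m + 2)
    have hp₀ : (p : ℚ) ≠ 0 := by exact_mod_cast hprime.out.ne_zero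
    have hpm : 2 * (3 * m + 2 : ℕ) + 1 = (p : ℚ) := by rw [hp]; push_cast; ring
    rw [hpm]
    field_simp [hp₀]
    ring
  · rw [add_zero]

lemma ratCongr_of_eq_six_mul_add_five :
    ratCongr p 2 (centralSum p 2) (-(2 / 9) * R3 p - p / 3) ∧
      ratCongr p 2 (centralSum p 3) (4 / 9 * R3 p + p / 3) := by
  obtain ⟨ρ, -, hR3, hprod⟩ := exists_reducesTo_R3 hp
  have hp' : p = 2 * (3 * m + 2) + 1 := by omega
  have hpm : 2 * (3 * m + 2 : ℕ) + 1 = (p : ℚ) := by rw [hp]; push_cast; ring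
  have hzero := reducesTo_centralSum_zero hp
  have hlin := reducesTo_linear_centralSum hp'
  have hquad := (reducesTo_quadratic_centralSum_sub hp').add hprod
  rw [hpm, sub_add_cancel, zero_add] at hquad
  have h2 : IsUnit (2 : ZMod (p ^ 2)) := isUnit_two_zmod (by omega)
  have h3 : IsUnit (3 : ZMod (p ^ 2)) := isUnit_three_zmod (by omega)
  constructor
  · refine ratCongr_of_reducesTo_natCast_mul (d := 9)
      (by convert h3.pow 2 using 1; norm_num) ?_
    convert ((reducesTo_nine_mul_centralSum_two hzero hlin hquad).add
        ((ReducesTo.ofNat 2).mul hR3)).add ((ReducesTo.ofNat 3).mul (.natCast p)) using 1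
    · push_cast
      ring
    · ring
  · refine ratCongr_of_reducesTo_natCast_mul (d := 18)
      (by convert h2.mul (h3.pow 2) using 1; norm_num) ?_
    convert ((reducesTo_eighteen_mul_centralSum_three hp' (by norm_num) hzero hlin hquad).sub
        ((ReducesTo.ofNat 8).mul hR3)).sub ((ReducesTo.ofNat 6).mul (.natCast p)) using 1
    · push_cast
      ring
    · ring

end PrimeSquare

lemma prod_ratio_mul_shiftedFactorial_five_mul (m : ℕ) {q : ℚ} (hq : q = 6 * m + 1) :
    (∏ i ∈ range (3 * m), (3 * i + 4 : ℚ) / (3 * i + 2)) * shiftedFactorial (5 * m) (-(q / 3)) =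
      q * (shiftedFactorial (2 * m) (-(q / 3)) ^ 2 * shiftedFactorial m (q / 3)) := by
  have hratio := prod_ratio_mul_shiftedFactorial (3 * m)
  have hadd := shiftedFactorial_add (2 * m) (3 * m) (-(q / 3))
  have hadd' := shiftedFactorial_add (2 * m) m (1 / 3 : ℚ)
  have hreflect := shiftedFactorial_reflect (2 * m) (1 / 3 : ℚ)
  have hshift := shiftedFactorial_sub_one_mul (2 * m) (-(q / 3))
  rw [show 2 * m + 3 * m = 5 * m by ring,
    show -(q / 3) + (2 * m : ℕ) = -(1 / 3) by rw [hq]; push_cast; ring] at hadd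
  rw [show 2 * m + m = 3 * m by ring,
    show (1 / 3 + (2 * m : ℕ) : ℚ) = q / 3 by rw [hq]; push_cast; ring] at hadd'
  rw [Even.neg_one_pow ⟨m, by ring⟩, one_mul,
    show -((2 * m : ℕ) + 1) - 1 / 3 = -(q / 3) - 1 by rw [hq]; push_cast; ring] at hreflect
  rw [← hreflect, show (2 * m : ℕ) + -(q / 3) = -(1 / 3) by rw [hq]; push_cast; ring] at hshift
  rw [hadd, mul_left_comm, hratio, hadd']
  linear_combination
    -3 * shiftedFactorial (2 * m) (-(q / 3)) * shiftedFactorial m (q / 3) * hshift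

lemma moment_half_mul_eq_moment_quarter_mul (m : ℕ) {q : ℚ} (hq : q = 6 * m + 1) :
    gesselStantonMoment 0 (3 * m) (1 / 2 : ℚ) * (shiftedFactorial m (-(q / 2)) * m.factorial) =
      gesselStantonMoment 0 (3 * m) (1 / 4 - (3 * m : ℕ) / 2 : ℚ) *
        shiftedFactorial m (-(q / 4)) ^ 2 := by
  have hhalf := gesselStantonMoment_zero_mul_prod (K := ℚ) two_mul_half_add_ne_zero m
  have hquarter := gesselStantonMoment_zero_mul_prod (K := ℚ)
    (two_mul_quarter_sub_add_ne_zero (3 * m)) m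
  have hrising (x : ℚ) : ∏ i ∈ range m, (x + i) = shiftedFactorial m (x - 1) :=
    prod_congr rfl fun i _ ↦ by ring
  rw [hrising, hrising, shiftedFactorial_reflect, show (1 / 2 + 1 / 2 - 1 : ℚ) = 0 by norm_num,
    shiftedFactorial_zero_right,
    show -((m : ℚ) + 1) - (1 / 2 + 2 * m - 1) = -(q / 2) by rw [hq]; ring] at hhalf
  rw [hrising, hrising, shiftedFactorial_reflect,
    show -((m : ℚ) + 1) - (1 / 4 - (3 * m : ℕ) / 2 + 2 * m - 1) = -(q / 4) by
      rw [hq]; push_cast; ring,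
    show (1 / 4 - (3 * m : ℕ) / 2 + 1 / 2 - 1 : ℚ) = -(q / 4) by rw [hq]; push_cast; ring,
    ← hhalf] at hquarter
  refine mul_left_cancel₀ (pow_ne_zero m (neg_ne_zero.2 (one_ne_zero (α := ℚ)))) ?_
  linear_combination -hquarter

section TruncatedExpansions

variable {R : Type*} [CommRing R] {τ a b k : R}

lemma sum_correction {s e g μ d w : R} (hτ : τ ^ 3 = 0)
    (hgμ : g * (1 - 6 * a * τ + 36 * b * τ ^ 2) = μ * (1 - 3 * a * τ + 9 * b * τ ^ 2) ^ 2)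
    (hs : s = e - 4 * (g - μ)) (hd : g - μ = τ ^ 2 * d) (hw : μ = s + τ * w) :
    s * (1 + 36 * τ ^ 2 * (a ^ 2 - 2 * b)) = e := by
  have hdiff : g - μ = 9 * s * τ ^ 2 * (a ^ 2 - 2 * b) := by
    linear_combination hgμ + (6 * a * τ - 36 * b * τ ^ 2) * hd + (9 * a ^ 2 - 18 * b) * τ ^ 2 * hw +
      ((9 * a ^ 2 - 18 * b) * w - 54 * a * b * μ + 81 * b ^ 2 * τ * μ + 6 * a * d -
        36 * b * τ * d) * hτ
  linear_combination hs - 4 * hdiff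

lemma shiftedFactorial_four_mul_neg_eight (hτ : τ ^ 3 = 0) {F : R → R}
    (hF : ∀ x, x ^ 3 = 0 → F x = k * (1 + a * x + b * x ^ 2)) :
    F (4 * τ) * F (-8 * τ) * (1 + 36 * τ ^ 2 * (a ^ 2 - 2 * b)) = F (-2 * τ) ^ 2 := by
  have hmul (c : R) : (c * τ) ^ 3 = 0 := by rw [mul_pow, hτ, mul_zero]
  rw [hF _ (hmul _), hF _ (hmul _), hF _ (hmul _)]
  grind

end TruncatedExpansions

section OneModThree

variable {p m : ℕ} [hprime : Fact p.Prime]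

lemma isUnit_twelve_zmod (hp : 3 < p) : IsUnit (12 : ZMod (p ^ 3)) := by
  convert ((isUnit_two_zmod (by omega)).pow 2).mul (isUnit_three_zmod hp) using 1
  norm_num

lemma isUnit_shiftedFactorial_of_cube_eq_zero {k : ℕ} (hk : k < p) {x : ZMod (p ^ 3)}
    (hx : x ^ 3 = 0) : IsUnit (shiftedFactorial k x) := by
  obtain ⟨a, b, hab⟩ := exists_shiftedFactorial_of_cube_eq_zero (R := ZMod (p ^ 3)) (r := k)
    fun j hj ↦ isUnit_natCast_add_one_zmod (by omega)
  rw [hab x hx, add_assoc]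
  refine (isUnit_factorial_zmod hk).mul (IsNilpotent.isUnit_one_add ⟨3, ?_⟩)
  rw [show a * x + b * x ^ 2 = x * (a + b * x) by ring, mul_pow, hx, zero_mul]

lemma exists_reducesTo_centralSum_zero_moments (hp : p = 6 * m + 1) {e : ZMod (p ^ 3)}
    (he : ReducesTo ((6 * m + 1) * ∏ i ∈ range (3 * m), (3 * i + 2 : ℚ) / (3 * i + 4)) e) :
    ∃ s d t : ZMod (p ^ 3), s = e - 4 * ((p : ZMod (p ^ 3)) ^ 2 * d) ∧
      ReducesTo (centralSum p 0) s ∧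
      ReducesTo (gesselStantonMoment 0 (3 * m) (1 / 4 - (3 * m : ℕ) / 2 : ℚ))
        ((p : ZMod (p ^ 3)) * t + s) ∧
      ReducesTo (gesselStantonMoment 0 (3 * m) (1 / 2 : ℚ))
        ((p : ZMod (p ^ 3)) ^ 2 * d + ((p : ZMod (p ^ 3)) * t + s)) := by
  obtain ⟨d, hd⟩ := exists_reducesTo_moment_half_sub (p := p) (n := 3 * m) (by omega)
  obtain ⟨t, ht⟩ := exists_reducesTo_moment_quarter_sub (p := p) (n := 3 * m) (by omega)
  have hzero : ReducesTo (centralSum p 0) (e - 4 * ((p : ZMod (p ^ 3)) ^ 2 * d)) := by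
    convert ((reducesTo_centralSum_zero_corrected hp).add he).sub
      ((ReducesTo.ofNat 4).mul hd) using 1
    · ring
    · rw [zero_add]
  have hquarter := ht.add hzero
  rw [sub_add_cancel] at hquarter
  have hhalf := hd.add hquarter
  rw [sub_add_cancel] at hhalf
  exact ⟨_, d, t, rfl, hzero, hquarter, hhalf⟩

variable {τ : ZMod (p ^ 3)} (hτ : 12 * τ = (p : ZMod (p ^ 3)))
include hτ

lemma twelfth_cube_eq_zero (hp : 3 < p) : τ ^ 3 = 0 := by
  apply ((isUnit_twelve_zmod hp).pow 3).mul_left_cancel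
  rw [← mul_pow, hτ, natCast_pow_eq_zero_zmod_pow le_rfl, mul_zero]

lemma shiftedFactorial_prime_sub_one_mul_twelfth (hp : 3 < p) (c : ZMod (p ^ 3)) :
    shiftedFactorial (p - 1) (c * τ) = ((p - 1).factorial : ZMod (p ^ 3)) := by
  obtain ⟨v, hv⟩ := (isUnit_twelve_zmod hp).exists_right_inv
  rw [show c * τ = c * v * (p : ZMod (p ^ 3)) by linear_combination c * v * hτ - c * τ * hv,
    shiftedFactorial_prime_sub_one hp (natCast_pow_eq_zero_zmod_pow le_rfl)]

lemma reducesTo_twelfth (hp : 3 < p) {x : ℚ} (c : ℤ) (hx : 12 * x = c * p) :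
    ReducesTo x (c * τ) := by
  convert (ReducesTo.intCast c).mul ((ReducesTo.natCast p).div (.ofNat 12)
    (isUnit_twelve_zmod hp) hτ) using 1
  linear_combination hx / 12

variable (hp : p = 6 * m + 1)
include hp

lemma shiftedFactorial_three_mul_sq :
    shiftedFactorial (3 * m) (-6 * τ) ^ 2 =
      shiftedFactorial (5 * m) (-4 * τ) * shiftedFactorial m (-8 * τ) := by
  have hp₃ : 3 < p := by have := hprime.out.one_lt; omega
  have hpm : (p : ZMod (p ^ 3)) = 6 * m + 1 := by exact_mod_cast congrArg Nat.cast hp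
  have hfive := shiftedFactorial_add_reflect (5 * m) m (-4 * τ)
  have hthree := shiftedFactorial_add_reflect (3 * m) (3 * m) (-6 * τ)
  rw [show 5 * m + m = p - 1 by omega, shiftedFactorial_prime_sub_one_mul_twelfth hτ hp₃,
    show -((5 * m : ℕ) + m + 1) - -4 * τ = -8 * τ by push_cast; linear_combination hpm + hτ]
    at hfive
  rw [show 3 * m + 3 * m = p - 1 by omega, shiftedFactorial_prime_sub_one_mul_twelfth hτ hp₃,
    show -((3 * m : ℕ) + (3 * m : ℕ) + 1) - -6 * τ = -6 * τ by
      push_cast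
      linear_combination hpm + hτ,
    show 3 * m = m + 2 * m by ring, pow_add, Even.neg_one_pow ⟨m, two_mul m⟩, mul_one,
    show m + 2 * m = 3 * m by ring, hfive] at hthree
  have hsign : ((-1 : ZMod (p ^ 3)) ^ m) ^ 2 = 1 := by rw [← pow_mul, mul_comm, pow_mul]; simp
  linear_combination -(-1) ^ m * hthree - (shiftedFactorial (3 * m) (-6 * τ) ^ 2 -
    shiftedFactorial (5 * m) (-4 * τ) * shiftedFactorial m (-8 * τ)) * hsign

lemma exists_reducesTo_prod_ratio_inv : ∃ e : ZMod (p ^ 3),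
    ReducesTo ((6 * m + 1) * ∏ i ∈ range (3 * m), (3 * i + 2 : ℚ) / (3 * i + 4)) e ∧
      shiftedFactorial (2 * m) (-4 * τ) ^ 2 * shiftedFactorial m (4 * τ) * e =
        shiftedFactorial (5 * m) (-4 * τ) := by
  have hp₃ : 3 < p := by have := hprime.out.one_lt; omega
  have hthird := reducesTo_twelfth hτ hp₃ (x := p / 3) 4 (by push_cast; ring)
  have hthird' := reducesTo_twelfth hτ hp₃ (x := -(p / 3)) (-4) (by push_cast; ring)
  push_cast at hthird hthird'
  have hcube (c : ZMod (p ^ 3)) : (c * τ) ^ 3 = 0 := by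
    rw [mul_pow, twelfth_cube_eq_zero hτ hp₃, mul_zero]
  have hunit : IsUnit (shiftedFactorial (2 * m) (-4 * τ) ^ 2 * shiftedFactorial m (4 * τ)) :=
    ((isUnit_shiftedFactorial_of_cube_eq_zero (by omega) (hcube _)).pow 2).mul
      (isUnit_shiftedFactorial_of_cube_eq_zero (by omega) (hcube _))
  obtain ⟨e, he⟩ := hunit.dvd (a := shiftedFactorial (5 * m) (-4 * τ))
  refine ⟨e, .of_mul_right ?_ (((hthird'.shiftedFactorial (2 * m)).pow 2).mul
    (hthird.shiftedFactorial m)) hunit he.symm, he.symm⟩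
  have hpm : (p : ℚ) = 6 * m + 1 := by rw [hp]; push_cast; ring
  rw [prod_ratio_inv, ← hpm]
  convert hthird'.shiftedFactorial (5 * m) using 1
  rw [mul_right_comm, ← prod_ratio_mul_shiftedFactorial_five_mul m hpm, mul_comm,
    inv_mul_cancel_left₀ (prod_ratio_ne_zero _)]

lemma exists_reducesTo_centralSum_zero {e : ZMod (p ^ 3)}
    (he : ReducesTo ((6 * m + 1) * ∏ i ∈ range (3 * m), (3 * i + 2 : ℚ) / (3 * i + 4)) e) :
    ∃ s : ZMod (p ^ 3), ReducesTo (centralSum p 0) s ∧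
      (p : ZMod (p ^ 3)) * s = (p : ZMod (p ^ 3)) * e ∧
      s * shiftedFactorial m (-2 * τ) ^ 2 =
        e * (shiftedFactorial m (4 * τ) * shiftedFactorial m (-8 * τ)) := by
  have hp₃ : 3 < p := by have := hprime.out.one_lt; omega
  have hπ : (p : ZMod (p ^ 3)) ^ 3 = 0 := natCast_pow_eq_zero_zmod_pow le_rfl
  have hτ₃ := twelfth_cube_eq_zero hτ hp₃
  obtain ⟨s, d, t, hs, hzero, hquarter, hhalf⟩ := exists_reducesTo_centralSum_zero_moments hp he
  have hthree := reducesTo_twelfth hτ hp₃ (x := -(p / 4)) (-3) (by push_cast; ring)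
  have hsix := reducesTo_twelfth hτ hp₃ (x := -(p / 2)) (-6) (by push_cast; ring)
  have hmoment := (hhalf.mul ((hsix.shiftedFactorial m).mul (.natCast _))).unique
    (moment_half_mul_eq_moment_quarter_mul m (q := p) (by rw [hp]; push_cast; ring) ▸
      hquarter.mul ((hthree.shiftedFactorial m).pow 2))
  obtain ⟨a, b, hab⟩ := exists_shiftedFactorial_of_cube_eq_zero (R := ZMod (p ^ 3)) (r := m)
    fun j hj ↦ isUnit_natCast_add_one_zmod (by omega)
  have hcube (c : ZMod (p ^ 3)) : (c * τ) ^ 3 = 0 := by rw [mul_pow, hτ₃, mul_zero]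
  rw [hab _ (hcube _), hab _ (hcube _)] at hmoment
  have hcorr : s * (1 + 36 * τ ^ 2 * (a ^ 2 - 2 * b)) = e := by
    refine sum_correction (g := (p : ZMod (p ^ 3)) ^ 2 * d + (p * t + s)) (μ := p * t + s)
      (d := 144 * d) (w := 12 * t) hτ₃ ?_ (by rw [hs]; ring) ?_ ?_
    · refine ((isUnit_factorial_zmod (show m < p by omega)).pow 2).mul_left_cancel ?_
      push_cast at hmoment
      linear_combination hmoment
    · linear_combination -(12 * τ + p) * d * hτ
    · linear_combination -t * hτ
  refine ⟨s, hzero, by linear_combination p * hs - 4 * d * hπ, ?_⟩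
  rw [← hcorr, ← shiftedFactorial_four_mul_neg_eight hτ₃ hab]
  ring

lemma exists_reducesTo_centralSums :
    ∃ s Q : ZMod (p ^ 3), ReducesTo (centralSum p 0) s ∧
      ReducesTo (9 * centralSum p 2 + 9 * centralSum p 1 + 2 * centralSum p 0) Q ∧
      s * (shiftedFactorial (2 * m) (-4 * τ) * shiftedFactorial m (-2 * τ)) ^ 2 =
        shiftedFactorial (3 * m) (-6 * τ) ^ 2 ∧
      s * Q = 2 * (p : ZMod (p ^ 3)) ^ 2 := by
  obtain ⟨e, he, hfactor⟩ := exists_reducesTo_prod_ratio_inv hτ hp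
  obtain ⟨s, hs, hse, hcorr⟩ := exists_reducesTo_centralSum_zero hτ hp he
  have hunit : IsUnit e := by
    refine isUnit_of_mul_isUnit_right (hfactor ▸ isUnit_shiftedFactorial_of_cube_eq_zero ?_ ?_)
    · omega
    · rw [mul_pow, twelfth_cube_eq_zero hτ (by have := hprime.out.one_lt; omega), mul_zero]
  obtain ⟨c, hc⟩ := hunit.dvd (a := (p : ZMod (p ^ 3)))
  refine ⟨s, 2 * p * c, hs, ?_, ?_, ?_⟩
  · have hratio : ReducesTo (∏ i ∈ range (3 * m), (3 * i + 4 : ℚ) / (3 * i + 2)) c := by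
      convert (ReducesTo.natCast p).div he hunit hc.symm using 1
      have hp₀ : (p : ℚ) ≠ 0 := by exact_mod_cast hprime.out.ne_zero
      rw [prod_ratio_inv, show (6 * m + 1 : ℚ) = p by rw [hp]; push_cast; ring, div_mul_eq_div_div,
        div_self hp₀, one_div, inv_inv]
    convert (reducesTo_quadratic_centralSum_sub_cube hp).add
      (((ReducesTo.ofNat 2).mul (.natCast p)).mul hratio) using 1
    · rw [hp]
      push_cast
      ring
    · rw [zero_add]
  · rw [shiftedFactorial_three_mul_sq hτ hp, ← hfactor]
    linear_combination shiftedFactorial (2 * m) (-4 * τ) ^ 2 * hcorr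
  · linear_combination 2 * c * hse - 2 * p * hc

end OneModThree

section CubicCosets

lemma sum_range_three_mul {M : Type*} [AddCommMonoid M] (n : ℕ) (f : ℕ → M) :
    ∑ k ∈ range (3 * n), f k = ∑ j ∈ range n, (f (3 * j) + f (3 * j + 1) + f (3 * j + 2)) := by
  induction n with
  | zero => simp
  | succ n ih => simp only [mul_add, mul_one, sum_range_succ, ih, add_assoc]

lemma add_mul_add_mul_sq_mul_conj {R : Type*} [CommRing R] {w : R} (hw : w ^ 2 + w + 1 = 0)
    (a b c : R) :
    (a + b * w + c * w ^ 2) * (a + b * w ^ 2 + c * w) =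
      a ^ 2 + b ^ 2 + c ^ 2 - a * b - a * c - b * c := by
  linear_combination (a * b + a * c + (b ^ 2 + c ^ 2) * (w - 1) + b * c * (w ^ 2 - w + 1)) * hw

variable {F : Type*} [Field F] [Fintype F] {m : ℕ} {g : F}

lemma exists_isPrimitiveRoot_card_sub_one (F : Type*) [Field F] [Fintype F] :
    ∃ g : F, IsPrimitiveRoot g (Fintype.card F - 1) := by
  classical
  obtain ⟨u, hu⟩ := IsCyclic.exists_ofOrder_eq_natCard (α := Fˣ)
  refine ⟨u, IsPrimitiveRoot.coe_units_iff.2 ?_⟩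
  rw [← Fintype.card_units, ← Nat.card_eq_fintype_card, ← hu]
  exact IsPrimitiveRoot.orderOf u

lemma ringChar_ne_two_of_card_eq (hF : Fintype.card F = 6 * m + 1) : ringChar F ≠ 2 := by
  rw [Ne, FiniteField.even_card_iff_char_two]
  omega

lemma ne_zero_of_isPrimitiveRoot_card_sub_one (hg : IsPrimitiveRoot g (Fintype.card F - 1)) :
    g ≠ 0 :=
  hg.ne_zero (by have := Fintype.one_lt_card (α := F); omega)

lemma image_pow_range_card_sub_one [DecidableEq F] (hg : IsPrimitiveRoot g (Fintype.card F - 1)) :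
    (range (Fintype.card F - 1)).image (g ^ ·) = univ.erase 0 := by
  refine eq_of_subset_of_card_le (fun t ht ↦ ?_) ?_
  · obtain ⟨k, -, rfl⟩ := mem_image.1 ht
    exact mem_erase.2 ⟨pow_ne_zero k (ne_zero_of_isPrimitiveRoot_card_sub_one hg), mem_univ _⟩
  · rw [card_erase_of_mem (mem_univ _), card_univ, card_image_of_injOn, card_range]
    exact fun i hi j hj hij ↦ hg.pow_inj (mem_range.1 hi) (mem_range.1 hj) hij

lemma sum_eq_sum_range_pow {M : Type*} [AddCommMonoid M]
    (hg : IsPrimitiveRoot g (Fintype.card F - 1)) {f : F → M} (hf : f 0 = 0) :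
    ∑ t, f t = ∑ k ∈ range (Fintype.card F - 1), f (g ^ k) := by
  classical
  rw [← sum_erase univ hf, ← image_pow_range_card_sub_one hg, sum_image]
  exact fun i hi j hj hij ↦ hg.pow_inj (mem_range.1 hi) (mem_range.1 hj) hij

lemma apply_ne_one_of_isPrimitiveRoot_card_sub_one {R : Type*} [CommRing R] {χ : MulChar F R}
    (hg : IsPrimitiveRoot g (Fintype.card F - 1)) (hχ : χ ≠ 1) : χ g ≠ 1 := by
  classical
  refine fun hw ↦ hχ (MulChar.ext fun t ↦ ?_)
  have ht : (t : F) ∈ (range (Fintype.card F - 1)).image (g ^ ·) := by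
    rw [image_pow_range_card_sub_one hg]
    exact mem_erase.2 ⟨t.ne_zero, mem_univ _⟩
  obtain ⟨k, -, hk⟩ := mem_image.1 ht
  rw [MulChar.one_apply_coe, ← hk, map_pow, hw, one_pow]

variable [DecidableEq F]

/-- The sum of the quadratic character over `1 - t`, where `t` runs through the coset of `g ^ i`
modulo cubes in the unit group, `g` being a generator of that group and `6 * m` its order. -/
def cubicCosetSum (m : ℕ) (g : F) (i : ℕ) : ℤ :=
  ∑ j ∈ range (2 * m), quadraticChar F (1 - g ^ (3 * j + i))

lemma sum_pow_mul_quadraticChar {R : Type*} [CommRing R] (m : ℕ) (g : F) {w : R}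
    (hw : w ^ 3 = 1) :
    ∑ k ∈ range (6 * m), w ^ k * (quadraticChar F (1 - g ^ k) : R) =
      cubicCosetSum m g 0 + cubicCosetSum m g 1 * w + cubicCosetSum m g 2 * w ^ 2 := by
  rw [show 6 * m = 3 * (2 * m) by ring, sum_range_three_mul]
  simp only [cubicCosetSum, Int.cast_sum, sum_mul, ← sum_add_distrib]
  refine sum_congr rfl fun j _ ↦ ?_
  rw [pow_add w, pow_add w, pow_mul, hw, one_pow, add_zero]
  ring

section Jacobi

variable (R : Type*) [CommRing R]

/-- The quadratic character of `F` with values in `R`. -/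
def quadraticCharIn (F : Type*) [Field F] [Fintype F] [DecidableEq F] : MulChar F R :=
  (quadraticChar F).ringHomComp (Int.castRingHom R)

lemma quadraticCharIn_sq : quadraticCharIn R F ^ 2 = 1 := by
  rw [quadraticCharIn, MulChar.ringHomComp_pow, (quadraticChar_isQuadratic F).sq_eq_one,
    MulChar.ringHomComp_one]

lemma quadraticCharIn_ne_one [CharZero R] (hF : ringChar F ≠ 2) : quadraticCharIn R F ≠ 1 :=
  fun h ↦ quadraticChar_ne_one hF <|
    (MulChar.ringHomComp_eq_one_iff (f := Int.castRingHom R) Int.cast_injective).1 h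

end Jacobi

variable (hF : Fintype.card F = 6 * m + 1) (hg : IsPrimitiveRoot g (Fintype.card F - 1))
include hF hg

lemma cubicCosetSum_add_add_eq_neg_one :
    cubicCosetSum m g 0 + cubicCosetSum m g 1 + cubicCosetSum m g 2 = -1 := by
  have hall : ∑ t : F, quadraticChar F (1 - t) = 0 := by
    rw [← quadraticChar_sum_zero (ringChar_ne_two_of_card_eq hF)]
    exact Fintype.sum_equiv (Equiv.subLeft 1) _ _ fun _ ↦ rfl
  have hunits := sum_eq_sum_range_pow hg
    (f := fun t ↦ quadraticChar F (1 - t) - if t = 0 then 1 else 0) (by simp)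
  have hpow := sum_pow_mul_quadraticChar m g (one_pow 3 : (1 : ℤ) ^ 3 = 1)
  simp only [sum_sub_distrib, hall, sum_ite_eq', mem_univ, if_true, pow_eq_zero_iff', hF,
    ne_zero_of_isPrimitiveRoot_card_sub_one hg, false_and, if_false, sum_const_zero,
    Nat.add_sub_cancel, Int.cast_id, one_pow, one_mul, mul_one] at hunits hpow
  linarith

lemma odd_cubicCosetSum_zero : Odd (cubicCosetSum m g 0) := by
  obtain ⟨n, hn⟩ : ∃ n, 2 * m = n + 1 :=
    ⟨2 * m - 1, by have := Fintype.one_lt_card (α := F); omega⟩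
  have hterm (j : ℕ) (hj : j ∈ range n) :
      (quadraticChar F (1 - g ^ (3 * (j + 1) + 0)) : ZMod 2) = 1 := by
    have hne : 1 - g ^ (3 * (j + 1)) ≠ 0 := by
      rw [sub_ne_zero, ne_comm]
      exact hg.pow_ne_one_of_pos_of_lt (by omega) (by have := mem_range.1 hj; omega)
    rcases quadraticChar_dichotomy hne with h | h <;> rw [add_zero, h] <;> decide
  rw [← ZMod.intCast_eq_one_iff_odd, cubicCosetSum, hn, sum_range_succ', Int.cast_add,
    Int.cast_sum, sum_congr rfl hterm]
  simp only [sum_const, card_range, nsmul_one, mul_zero, pow_zero, sub_self, MulChar.map_zero,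
    Int.cast_zero, add_zero]
  exact ZMod.natCast_eq_one_iff_odd.2 (Nat.odd_iff.2 (by omega))

lemma jacobiSum_quadraticCharIn {R : Type*} [CommRing R] {χ : MulChar F R}
    (hχ : χ ^ 3 = 1) :
    jacobiSum χ (quadraticCharIn R F) =
      cubicCosetSum m g 0 + cubicCosetSum m g 1 * χ g + cubicCosetSum m g 2 * χ g ^ 2 := by
  have hw : χ g ^ 3 = 1 := by
    rw [← MulChar.pow_apply' χ three_ne_zero, hχ,
      MulChar.one_apply (ne_zero_of_isPrimitiveRoot_card_sub_one hg).isUnit]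
  rw [← sum_pow_mul_quadraticChar m g hw, jacobiSum,
    sum_eq_sum_range_pow hg (by rw [MulChar.map_zero χ, zero_mul]), hF, Nat.add_sub_cancel]
  simp only [map_pow, quadraticCharIn, MulChar.ringHomComp_apply, Int.coe_castRingHom]

lemma cubicCosetSum_norm_eq_card :
    cubicCosetSum m g 0 ^ 2 + cubicCosetSum m g 1 ^ 2 + cubicCosetSum m g 2 ^ 2 -
      cubicCosetSum m g 0 * cubicCosetSum m g 1 - cubicCosetSum m g 0 * cubicCosetSum m g 2 -
      cubicCosetSum m g 1 * cubicCosetSum m g 2 = Fintype.card F := by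
  obtain ⟨χ, hχ⟩ := MulChar.exists_mulChar_orderOf F (n := 3) (by rw [hF]; omega)
    (Complex.isPrimitiveRoot_exp 3 three_ne_zero)
  have hχ₃ : χ ^ 3 = 1 := by rw [← hχ, pow_orderOf_eq_one]
  have hχ₁ : χ ≠ 1 := by
    rintro rfl
    norm_num at hχ
  have hφ₂ := quadraticCharIn_sq ℂ (F := F)
  have hφ₁ := quadraticCharIn_ne_one ℂ (ringChar_ne_two_of_card_eq hF)
  have hinv : χ⁻¹ = χ ^ 2 := by rw [inv_eq_iff_mul_eq_one, ← pow_succ', hχ₃]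
  have hprod : χ * quadraticCharIn ℂ F ≠ 1 := fun h ↦ hφ₁ <| by
    calc quadraticCharIn ℂ F = (χ * quadraticCharIn ℂ F) ^ 3 := by
          rw [mul_pow, hχ₃, one_mul, pow_succ, hφ₂, one_mul]
      _ = 1 := by rw [h, one_pow]
  have hnorm := jacobiSum_mul_jacobiSum_inv (F := F) (F' := ℂ)
    (by rw [ringChar.eq_zero]; exact (CharP.ringChar_ne_zero_of_finite F).symm) hχ₁ hφ₁ hprod
  have hw : χ g ^ 2 + χ g + 1 = 0 := by
    have hw₁ := sub_ne_zero.2 (apply_ne_one_of_isPrimitiveRoot_card_sub_one hg hχ₁)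
    have hw₃ : χ g ^ 3 = 1 := by
      rw [← MulChar.pow_apply' χ three_ne_zero, hχ₃,
        MulChar.one_apply (ne_zero_of_isPrimitiveRoot_card_sub_one hg).isUnit]
    exact (mul_eq_zero.1 (by linear_combination hw₃)).resolve_left hw₁
  rw [inv_eq_iff_mul_eq_one.2 (by rw [← sq, hφ₂] : quadraticCharIn ℂ F * _ = 1), hinv,
    jacobiSum_quadraticCharIn hF hg hχ₃,
    jacobiSum_quadraticCharIn hF hg (by rw [← pow_mul, mul_comm, pow_mul, hχ₃, one_pow]),
    MulChar.pow_apply' χ two_ne_zero,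
    show (χ g ^ 2) ^ 2 = χ g by linear_combination (χ g ^ 2 - χ g) * hw,
    add_mul_add_mul_sq_mul_conj hw] at hnorm
  exact_mod_cast hnorm

end CubicCosets

section Representation

lemma sq_eq_sq_of_dvd_of_eq_sq_add_three_mul_sq {p x y c b : ℤ} (hp : 0 < p)
    (hxy : p = x ^ 2 + 3 * y ^ 2) (hcb : p = c ^ 2 + 3 * b ^ 2) (hdvd : p ∣ c * y - b * x) :
    c ^ 2 = x ^ 2 := by
  obtain ⟨k, hk⟩ := hdvd
  have hbrahmagupta : (c * x + 3 * b * y) ^ 2 + 3 * (p * k) ^ 2 = p ^ 2 := by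
    rw [← hk]
    linear_combination (-p) * hxy - (x ^ 2 + 3 * y ^ 2) * hcb
  have hk₀ : k = 0 := by
    by_contra hk₀
    have hpk : p ^ 2 ≤ (p * k) ^ 2 := by
      rw [sq_le_sq, abs_mul]
      exact le_mul_of_one_le_right (abs_nonneg p) (Int.one_le_abs hk₀)
    nlinarith [sq_nonneg (c * x + 3 * b * y), pow_pos hp 2]
  have hcy : c * y = b * x := by linear_combination hk + p * hk₀
  have hsq : p * c ^ 2 = p * x ^ 2 := by
    linear_combination c ^ 2 * hxy - x ^ 2 * hcb + 3 * (c * y + b * x) * hcy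
  exact mul_left_cancel₀ hp.ne' hsq

lemma sq_eq_sq_of_eq_sq_add_three_mul_sq {p x y c b : ℤ} (hp : Prime p) (hpos : 0 < p)
    (hxy : p = x ^ 2 + 3 * y ^ 2) (hcb : p = c ^ 2 + 3 * b ^ 2) : c ^ 2 = x ^ 2 := by
  have hdvd : p ∣ (c * y - b * x) * (c * y - -b * x) :=
    ⟨y ^ 2 - b ^ 2, by linear_combination b ^ 2 * hxy - y ^ 2 * hcb⟩
  rcases hp.dvd_or_dvd hdvd with h | h
  · exact sq_eq_sq_of_dvd_of_eq_sq_add_three_mul_sq hpos hxy hcb h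
  · exact sq_eq_sq_of_dvd_of_eq_sq_add_three_mul_sq hpos hxy (by rw [hcb]; ring) h

lemma two_mul_cubicCosetSum_sub_sub_sq {p m : ℕ} [hprime : Fact p.Prime] (hp : p = 6 * m + 1)
    {g : ZMod p} (hg : IsPrimitiveRoot g (Fintype.card (ZMod p) - 1)) {x y : ℤ}
    (hxy : (p : ℤ) = x ^ 2 + 3 * y ^ 2) :
    (2 * cubicCosetSum m g 0 - cubicCosetSum m g 1 - cubicCosetSum m g 2) ^ 2 = 4 * x ^ 2 := by
  have hcard : Fintype.card (ZMod p) = 6 * m + 1 := by rw [ZMod.card, hp]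
  obtain ⟨a, ha⟩ := odd_cubicCosetSum_zero hcard hg
  have hsum := cubicCosetSum_add_add_eq_neg_one hcard hg
  have hnorm := cubicCosetSum_norm_eq_card hcard hg
  rw [ZMod.card] at hnorm
  have hsq : (3 * a + 2) ^ 2 = x ^ 2 := by
    refine sq_eq_sq_of_eq_sq_add_three_mul_sq (b := cubicCosetSum m g 1 + a + 1)
      (Nat.prime_iff_prime_int.1 hprime.out) (mod_cast hprime.out.pos) hxy ?_
    rw [ha, show cubicCosetSum m g 2 = -2 - 2 * a - cubicCosetSum m g 1 by linarith] at hnorm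
    linear_combination -hnorm
  linear_combination 4 * hsq +
    (2 * cubicCosetSum m g 0 - cubicCosetSum m g 1 - cubicCosetSum m g 2 + 6 * a + 4) *
      (3 * ha - hsum)

end Representation

section RootsOfUnitySums

variable {R : Type*} [CommRing R] {G : R} {n : ℕ}

lemma sum_pow_of_pow_eq_one (hG : G ^ n = 1) (hunit : ∀ e, ¬ n ∣ e → IsUnit (G ^ e - 1)) (e : ℕ) :
    ∑ k ∈ range n, (G ^ e) ^ k = if n ∣ e then (n : R) else 0 := by
  have hGe : (G ^ e) ^ n = 1 := by rw [← pow_mul, mul_comm, pow_mul, hG, one_pow]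
  split_ifs with hdvd
  · obtain ⟨c, rfl⟩ := hdvd
    simp [pow_mul, hG]
  · refine (hunit e hdvd).mul_left_cancel ?_
    rw [mul_geom_sum, hGe, sub_self, mul_zero]

lemma sum_pow_mul_one_sub_pow (hG : G ^ n = 1) (hunit : ∀ e, ¬ n ∣ e → IsUnit (G ^ e - 1))
    (a D : ℕ) :
    ∑ k ∈ range n, (G ^ a) ^ k * (1 - G ^ k) ^ D =
      n * ∑ i ∈ range (D + 1) with n ∣ a + i, (-1) ^ i * (D.choose i : R) := by
  have hexpand (k : ℕ) : (G ^ a) ^ k * (1 - G ^ k) ^ D =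
      ∑ i ∈ range (D + 1), (-1) ^ i * (D.choose i : R) * (G ^ (a + i)) ^ k := by
    rw [sub_eq_neg_add, add_pow, mul_sum]
    refine sum_congr rfl fun i _ ↦ ?_
    rw [neg_pow, pow_add, mul_pow, ← pow_mul G k i, mul_comm k i, pow_mul G i k, one_pow]
    ring
  simp only [hexpand]
  rw [sum_comm, mul_sum, sum_filter]
  refine sum_congr rfl fun i _ ↦ ?_
  rw [← mul_sum, sum_pow_of_pow_eq_one hG hunit]
  split_ifs <;> ring

/-- The sum of the entries of row `3 * m + 6 * m * s` of Pascal's triangle whose position is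
congruent to `2 * m` modulo `6 * m`. -/
def chooseSection (m s : ℕ) : ℕ :=
  ∑ j ∈ range (s + 1), (3 * m + 6 * m * s).choose (2 * m + 6 * m * j)

lemma filter_dvd_range_eq_image {m : ℕ} (hm : 0 < m) (s : ℕ) :
    {i ∈ range (3 * m + 6 * m * s + 1) | 6 * m ∣ 4 * m + i} =
      (range (s + 1)).image fun j ↦ 2 * m + 6 * m * j := by
  ext i
  simp only [mem_filter, mem_range, mem_image]
  constructor
  · rintro ⟨hi, c, hc⟩
    obtain _ | j := c
    · omega
    refine ⟨j, ?_, by linarith [mul_add (6 * m) j 1]⟩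
    by_contra hj
    nlinarith
  · rintro ⟨j, hj, rfl⟩
    refine ⟨by nlinarith, j + 1, by ring⟩

lemma sum_pow_four_mul_mul_one_sub_pow {m : ℕ} (hm : 0 < m) (hG : G ^ (6 * m) = 1)
    (hunit : ∀ e, ¬ 6 * m ∣ e → IsUnit (G ^ e - 1)) (s : ℕ) :
    ∑ k ∈ range (6 * m), (G ^ (4 * m)) ^ k * (1 - G ^ k) ^ (3 * m + 6 * m * s) =
      (6 * m : ℕ) * (chooseSection m s : R) := by
  rw [sum_pow_mul_one_sub_pow hG hunit, filter_dvd_range_eq_image hm, sum_image, chooseSection,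
    Nat.cast_sum]
  · refine congrArg _ (sum_congr rfl fun j _ ↦ ?_)
    rw [Even.neg_one_pow ⟨m + 3 * m * j, by ring⟩, one_mul]
  · intro i _ j _ hij
    exact Nat.eq_of_mul_eq_mul_left (by omega : 0 < 6 * m) (Nat.add_left_cancel hij)

/- The derivative of `15 * v - 10 * v ^ 3 + 3 * v ^ 5` is `15 * (v ^ 2 - 1) ^ 2`, so at `v = ± 1`
the polynomial agrees with its value `± 8` to third order. -/
lemma quintic_eq_of_sub_cube_eq_zero {v ε : R} (hε : ε ^ 2 = 1) (hv : (v - ε) ^ 3 = 0) :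
    15 * v - 10 * v ^ 3 + 3 * v ^ 5 = 8 * ε := by
  linear_combination
    (ε * (3 * ε ^ 2 - 7) + 15 * (ε ^ 2 - 1) * (v - ε) + 30 * ε * (v - ε) ^ 2) * hε +
      (30 * ε ^ 2 - 10 + 15 * ε * (v - ε) + 3 * (v - ε) ^ 2) * hv

end RootsOfUnitySums

section Lift

variable {p r : ℕ} [hprime : Fact p.Prime] (hr : r ≠ 0)

lemma pow_eq_zero_of_castHom_eq_zero {x : ZMod (p ^ r)}
    (hx : ZMod.castHom (dvd_pow_self p hr) (ZMod p) x = 0) : x ^ r = 0 := by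
  have : NeZero (p ^ r) := ⟨pow_ne_zero r hprime.out.ne_zero⟩
  rw [← ZMod.natCast_zmod_val x] at hx ⊢
  rw [map_natCast, ZMod.natCast_eq_zero_iff] at hx
  exact_mod_cast (ZMod.natCast_eq_zero_iff _ _).2 (pow_dvd_pow_of_dvd hx r)

lemma isUnit_of_castHom_ne_zero {x : ZMod (p ^ r)}
    (hx : ZMod.castHom (dvd_pow_self p hr) (ZMod p) x ≠ 0) : IsUnit x := by
  have : NeZero (p ^ r) := ⟨pow_ne_zero r hprime.out.ne_zero⟩
  rw [← ZMod.natCast_zmod_val x] at hx ⊢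
  rw [map_natCast, Ne, ZMod.natCast_eq_zero_iff] at hx
  exact isUnit_natCast_zmod_prime_pow hprime.out r hx

lemma exists_teichmullerLift {g : ZMod p} (hg : g ≠ 0) :
    ∃ G : ZMod (p ^ r), ZMod.castHom (dvd_pow_self p hr) (ZMod p) G = g ∧ G ^ (p - 1) = 1 := by
  obtain ⟨n, rfl⟩ := Nat.exists_eq_succ_of_ne_zero hr
  have hcoprime : g.val.Coprime (p ^ (n + 1)) := by
    refine ((hprime.out.coprime_iff_not_dvd.2 fun hdvd ↦ hg ?_).symm).pow_right (n + 1)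
    rw [← ZMod.natCast_zmod_val g]
    exact (ZMod.natCast_eq_zero_iff _ _).2 hdvd
  refine ⟨(g.val : ZMod (p ^ (n + 1))) ^ p ^ n, ?_, ?_⟩
  · rw [map_pow, map_natCast, ZMod.natCast_zmod_val, ZMod.pow_card_pow]
  · have hfermat := congrArg Units.val (ZMod.pow_totient (ZMod.unitOfCoprime _ hcoprime))
    rwa [Nat.totient_prime_pow_succ hprime.out, Units.val_pow_eq_pow_val,
      ZMod.coe_unitOfCoprime, Units.val_one, pow_mul] at hfermat

lemma isUnit_pow_sub_one_of_castHom_isPrimitiveRoot {n : ℕ} {g : ZMod p} (hg : IsPrimitiveRoot g n)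
    {G : ZMod (p ^ r)} (hG : ZMod.castHom (dvd_pow_self p hr) (ZMod p) G = g) {e : ℕ}
    (he : ¬ n ∣ e) : IsUnit (G ^ e - 1) := by
  refine isUnit_of_castHom_ne_zero hr ?_
  rw [map_sub, map_pow, hG, map_one, Ne, sub_eq_zero, hg.pow_eq_one_iff_dvd]
  exact he

end Lift

section JacobiSum

variable {p m : ℕ} [hprime : Fact p.Prime] (hp : p = 6 * m + 1)
include hp

lemma eight_mul_quadraticChar_castHom (v : ZMod (p ^ 3)) :
    8 * (quadraticChar (ZMod p) (ZMod.castHom (dvd_pow_self p three_ne_zero) (ZMod p) v) :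
        ZMod (p ^ 3)) =
      15 * v ^ (3 * m + 6 * m * 0) - 10 * v ^ (3 * m + 6 * m * 1) +
        3 * v ^ (3 * m + 6 * m * 2) := by
  have hm : 0 < m := by have := hprime.out.one_lt; omega
  set q := quadraticChar (ZMod p) (ZMod.castHom (dvd_pow_self p three_ne_zero) (ZMod p) v) with hq
  have hodd : v ^ (3 * m + 6 * m * 0) = v ^ (3 * m) ∧ v ^ (3 * m + 6 * m * 1) = (v ^ (3 * m)) ^ 3 ∧
      v ^ (3 * m + 6 * m * 2) = (v ^ (3 * m)) ^ 5 := by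
    simp only [← pow_mul]
    refine ⟨?_, ?_, ?_⟩ <;> congr 1 <;> ring
  rw [hodd.1, hodd.2.1, hodd.2.2]
  by_cases hv : ZMod.castHom (dvd_pow_self p three_ne_zero) (ZMod p) v = 0
  · have hpow : v ^ (3 * m) = 0 := by
      rw [pow_mul, pow_eq_zero_of_castHom_eq_zero three_ne_zero hv, zero_pow hm.ne']
    rw [hq, hv, hpow]
    simp
  · have heuler : ZMod.castHom (dvd_pow_self p three_ne_zero) (ZMod p) (v ^ (3 * m) - q) = 0 := by
      have hchar : ringChar (ZMod p) ≠ 2 := by rw [ZMod.ringChar_zmod_n]; omega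
      rw [map_sub, map_pow, map_intCast, hq, quadraticChar_eq_pow_of_char_ne_two' hchar,
        ZMod.card, show p / 2 = 3 * m by omega, sub_self]
    have hsq : (q : ZMod (p ^ 3)) ^ 2 = 1 := by
      rw [← Int.cast_pow, hq, quadraticChar_sq_one hv, Int.cast_one]
    exact (quintic_eq_of_sub_cube_eq_zero hsq
      (pow_eq_zero_of_castHom_eq_zero three_ne_zero heuler)).symm

lemma exists_mul_eq_natCast_and_eight_mul_eq {x y : ℤ} (hxy : (p : ℤ) = x ^ 2 + 3 * y ^ 2) :
    ∃ J K : ZMod (p ^ 3), J * K = (p : ZMod (p ^ 3)) ∧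
      (J + K) ^ 2 = 4 * (x : ZMod (p ^ 3)) ^ 2 ∧
      8 * J = ((6 * m : ℕ) : ZMod (p ^ 3)) * (15 * (chooseSection m 0 : ZMod (p ^ 3)) -
        10 * (chooseSection m 1 : ZMod (p ^ 3)) + 3 * (chooseSection m 2 : ZMod (p ^ 3))) := by
  have hm : 0 < m := by have := hprime.out.one_lt; omega
  have hcard : Fintype.card (ZMod p) = 6 * m + 1 := by rw [ZMod.card, hp]
  obtain ⟨g, hg⟩ := exists_isPrimitiveRoot_card_sub_one (ZMod p)
  obtain ⟨G, hGg, hG⟩ := exists_teichmullerLift (r := 3) three_ne_zero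
    (ne_zero_of_isPrimitiveRoot_card_sub_one hg)
  have hunit (e : ℕ) (he : ¬ 6 * m ∣ e) : IsUnit (G ^ e - 1) := by
    refine isUnit_pow_sub_one_of_castHom_isPrimitiveRoot three_ne_zero hg hGg ?_
    rwa [hcard, Nat.add_sub_cancel]
  have hG₁ : G ^ (6 * m) = 1 := by rwa [show p - 1 = 6 * m by omega] at hG
  set w := G ^ (4 * m) with hw
  have hw₃ : w ^ 3 = 1 := by
    rw [hw, ← pow_mul, show 4 * m * 3 = 6 * m * 2 by ring, pow_mul, hG₁, one_pow]
  have hw₀ : w ^ 2 + w + 1 = 0 := by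
    refine (hunit (4 * m) fun hdvd ↦ ?_).mul_left_cancel (by linear_combination hw₃)
    have := Nat.le_of_dvd (by omega) hdvd
    omega
  have hjacobi := sum_pow_mul_quadraticChar m g hw₃
  have hnorm := congrArg (Int.cast : ℤ → ZMod (p ^ 3)) (cubicCosetSum_norm_eq_card hcard hg)
  have htrace := congrArg (Int.cast : ℤ → ZMod (p ^ 3)) (two_mul_cubicCosetSum_sub_sub_sq hp hg hxy)
  rw [ZMod.card] at hnorm
  push_cast at hnorm htrace
  refine ⟨∑ k ∈ range (6 * m), w ^ k * (quadraticChar (ZMod p) (1 - g ^ k) : ZMod (p ^ 3)),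
    cubicCosetSum m g 0 + cubicCosetSum m g 1 * w ^ 2 + cubicCosetSum m g 2 * w, ?_, ?_, ?_⟩
  · rw [hjacobi, add_mul_add_mul_sq_mul_conj hw₀, hnorm]
  · rw [hjacobi, ← htrace]
    congr 1
    linear_combination (cubicCosetSum m g 1 + cubicCosetSum m g 2 : ZMod (p ^ 3)) * hw₀
  · have hterm (k : ℕ) := eight_mul_quadraticChar_castHom hp (1 - G ^ k)
    simp only [map_sub, map_one, map_pow, hGg] at hterm
    have hsection := sum_pow_four_mul_mul_one_sub_pow hm hG₁ hunit
    rw [mul_add, mul_sub, mul_left_comm _ 15, mul_left_comm _ 10, mul_left_comm _ 3,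
      ← hsection, ← hsection, ← hsection, mul_sum, mul_sum, mul_sum, mul_sum, ← sum_sub_distrib,
      ← sum_add_distrib]
    refine sum_congr rfl fun k _ ↦ ?_
    linear_combination w ^ k * hterm k

end JacobiSum

section Extrapolation

variable {R : Type*} [CommRing R] {τ μ : R} (hτ : τ ^ 3 = 0) (hμ : 6 * μ = 12 * τ - 1)

lemma mul_eq_of_mul_eq {t d X e v c w : R} (h : t * d = X * e) (hd : d * v = c) (he : e * v = w) :
    c * t = X * w := by
  rw [← hd, ← he, mul_comm, ← mul_assoc, h, mul_assoc]

include hτ hμ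

lemma mul_section_one_of_cube_eq_zero {t₀ t₁ X₀ X₁ : R}
    (h₀ : t₀ * (3 * μ + 12 * τ) = X₀ * (μ + 12 * τ))
    (h₁ : t₁ * (3 * μ + 12 * τ) = X₁ * (2 * μ + 12 * τ)) :
    3 * t₀ = X₀ * (1 - 48 * τ - 1728 * τ ^ 2) ∧ 3 * t₁ = X₁ * (2 - 24 * τ - 864 * τ ^ 2) := by
  have hd : (3 * μ + 12 * τ) * (-6 * (1 + 36 * τ + 1296 * τ ^ 2)) = 3 := by
    linear_combination -3 * (1 + 36 * τ + 1296 * τ ^ 2) * hμ - 139968 * hτ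
  refine ⟨mul_eq_of_mul_eq h₀ hd ?_, mul_eq_of_mul_eq h₁ hd ?_⟩
  · linear_combination -(1 + 36 * τ + 1296 * τ ^ 2) * hμ - 108864 * hτ
  · linear_combination -2 * (1 + 36 * τ + 1296 * τ ^ 2) * hμ - 124416 * hτ

lemma mul_section_two_of_cube_eq_zero {t₀ t₁ t₂ X₀ X₁ X₂ : R}
    (h₀ : t₀ * ((3 * μ + 24 * τ) * (3 * μ + 24 * τ - 1)) =
      X₀ * ((μ + 24 * τ) * (μ + 24 * τ - 1)))
    (h₁ : t₁ * ((3 * μ + 24 * τ) * (3 * μ + 24 * τ - 1)) =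
      X₁ * (2 * ((2 * μ + 12 * τ) * (μ + 12 * τ))))
    (h₂ : t₂ * ((3 * μ + 24 * τ) * (3 * μ + 24 * τ - 1)) =
      X₂ * ((2 * μ + 24 * τ) * (2 * μ + 24 * τ - 1))) :
    27 * t₀ = X₀ * (7 - 688 * τ - 39104 * τ ^ 2) ∧
      27 * t₁ = X₁ * (4 - 208 * τ - 5312 * τ ^ 2) ∧
      27 * t₂ = X₂ * (16 - 400 * τ - 22976 * τ ^ 2) := by
  have hd : (3 * μ + 24 * τ) * (3 * μ + 24 * τ - 1) * (36 * (1 + 80 * τ + 5200 * τ ^ 2)) = 27 := by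
    linear_combination 9 * (1 + 80 * τ + 5200 * τ ^ 2) * (6 * μ + 108 * τ - 3) * hμ +
      27 * (6240000 * τ - 320000) * hτ
  refine ⟨mul_eq_of_mul_eq h₀ hd ?_, mul_eq_of_mul_eq h₁ hd ?_, mul_eq_of_mul_eq h₂ hd ?_⟩
  · linear_combination (1 + 80 * τ + 5200 * τ ^ 2) * (6 * μ + 300 * τ - 7) * hμ +
      (126547200 * τ - 4542720) * hτ
  · linear_combination 4 * (1 + 80 * τ + 5200 * τ ^ 2) * (6 * μ + 120 * τ - 1) * hμ +
      (83865600 * τ - 1455360) * hτ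
  · linear_combination 4 * (1 + 80 * τ + 5200 * τ ^ 2) * (6 * μ + 156 * τ - 4) * hμ +
      (146764800 * τ - 6478080) * hτ

/- The sum of `T i j` over `i + j = s` is a quadratic polynomial in `s` modulo `τ ^ 3`, up to the
factor `1 / (6 * μ)`. The weights 15, -10, 3 are eight times those of Lagrange extrapolation from
`s = 0, 1, 2` to `s = -1 / 2`, where only the value at `i = -1 / 3`, `j = -1 / 6` survives. -/
lemma choose_extrapolation (hthree : IsUnit (3 : R)) {F G H : R → R} {U a b c d e f : R}
    (hF : ∀ x, x ^ 3 = 0 → F x = 1 + a * x + b * x ^ 2)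
    (hG : ∀ x, x ^ 3 = 0 → G x = 1 + c * x + d * x ^ 2)
    (hH : ∀ x, x ^ 3 = 0 → H x = 1 + e * x + f * x ^ 2) {T : ℕ → ℕ → R}
    (hT : ∀ i j, i + j ≤ 2 →
      T i j * (descPochhammer R (i + j)).eval (3 * μ + 12 * (i + j) * τ) =
        U * (F (12 * (i + j) * τ) * G (12 * i * τ) * H (12 * j * τ)) *
          ((i + j).choose i * ((descPochhammer R i).eval (2 * μ + 12 * i * τ) *
            (descPochhammer R j).eval (μ + 12 * j * τ)))) :
    6 * μ * (15 * T 0 0 - 10 * (T 0 1 + T 1 0) + 3 * (T 0 2 + T 1 1 + T 2 0)) =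
      -8 * (U * (F (-6 * τ) * G (-4 * τ) * H (-2 * τ))) := by
  have hcube (x : R) : (x * τ) ^ 3 = 0 := by rw [mul_pow, hτ, mul_zero]
  simp only [hF _ (hcube _), hG _ (hcube _), hH _ (hcube _)] at hT ⊢
  have h₀₀ := hT 0 0 (by norm_num)
  have h₀₁ := hT 0 1 (by norm_num)
  have h₁₀ := hT 1 0 (by norm_num)
  have h₀₂ := hT 0 2 (by norm_num)
  have h₁₁ := hT 1 1 (by norm_num)
  have h₂₀ := hT 2 0 (by norm_num)
  norm_num [descPochhammer_succ_right] at h₀₀ h₀₁ h₁₀ h₀₂ h₁₁ h₂₀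
  obtain ⟨e₀₁, e₁₀⟩ := mul_section_one_of_cube_eq_zero hτ hμ h₀₁ h₁₀
  obtain ⟨e₀₂, e₁₁, e₂₀⟩ := mul_section_two_of_cube_eq_zero hτ hμ h₀₂ h₁₁ h₂₀
  refine (hthree.pow 3).mul_left_cancel ?_
  trans (12 * τ - 1) * (15 * (27 * T 0 0) - 90 * (3 * T 0 1 + 3 * T 1 0) +
    3 * (27 * T 0 2 + 27 * T 1 1 + 27 * T 2 0))
  · rw [hμ]
    ring
  · rw [h₀₀, e₀₁, e₁₀, e₀₂, e₁₁, e₂₀]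
    clear * - hτ
    grind

end Extrapolation

section ChooseCongruence

lemma choose_mul_ascFactorial_mul_descFactorial (q r s i j : ℕ) :
    (r + s + (i + j) * q).choose (r + i * q) *
        ((i * (q + 1) + 1).ascFactorial r * (j * (q + 1) + 1).ascFactorial s *
          (r + s + (i + j) * (q + 1)).descFactorial (i + j)) =
      ((i + j) * (q + 1)).choose (i * (q + 1)) *
        (((i + j) * (q + 1) + 1).ascFactorial (r + s) *
          ((r + i * (q + 1)).descFactorial i * (s + j * (q + 1)).descFactorial j)) := by
  have hfactorial (k l : ℕ) : (l + k * q).factorial * (l + k * (q + 1)).descFactorial k =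
      (k * (q + 1)).factorial * (k * (q + 1) + 1).ascFactorial l := by
    rw [Nat.factorial_mul_ascFactorial, add_comm (k * (q + 1)),
      ← Nat.factorial_mul_descFactorial (show k ≤ l + k * (q + 1) by nlinarith)]
    congr 2
    rw [mul_add, mul_one, ← add_assoc, Nat.add_sub_cancel]
  have hchoose (k l k' l' : ℕ) : (k + l + (k' + l')).choose (k + k') *
      ((k + k').factorial * (l + l').factorial) = (k + l + (k' + l')).factorial := by
    rw [add_add_add_comm, Nat.choose_symm_add, ← mul_assoc,
      Nat.add_choose_mul_factorial_mul_factorial]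
  have hC := hchoose r s (i * q) (j * q)
  have hC' := hchoose 0 0 (i * (q + 1)) (j * (q + 1))
  simp only [← add_mul, zero_add] at hC hC'
  have hr := hfactorial i r
  have hs := hfactorial j s
  have hrs := hfactorial (i + j) (r + s)
  refine Nat.eq_of_mul_eq_mul_left (Nat.mul_pos (i * (q + 1)).factorial_pos
    (j * (q + 1)).factorial_pos) ?_
  zify at *
  grind

lemma shiftedFactorial_natCast {R : Type*} [CommRing R] (r n : ℕ) :
    shiftedFactorial r (n : R) = ((n + 1).ascFactorial r : R) := by
  rw [shiftedFactorial, Nat.ascFactorial_eq_prod_range, Nat.cast_prod]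
  refine prod_congr rfl fun j _ ↦ ?_
  push_cast
  ring

variable {p : ℕ} [hprime : Fact p.Prime]

lemma natCast_choose_two_mul_prime (hp : 3 < p) : ((2 * p).choose p : ZMod (p ^ 3)) = 2 := by
  refine (isUnit_factorial_zmod (show p - 1 < p by omega)).mul_left_cancel ?_
  have hasc : (p - 1).factorial * (2 * p).choose p = (p + 1).ascFactorial (p - 1) * 2 := by
    refine Nat.eq_of_mul_eq_mul_left hprime.out.pos ?_
    have hsucc := Nat.ascFactorial_succ (n := p + 1) (k := p - 1)
    rw [Nat.succ_eq_add_one, Nat.sub_add_cancel hprime.out.one_le,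
      Nat.ascFactorial_eq_factorial_mul_choose, ← two_mul,
      ← Nat.mul_factorial_pred hprime.out.ne_zero,
      show p + 1 + (p - 1) = 2 * p by have := hprime.out.one_lt; omega] at hsucc
    linarith
  have hcast := congrArg (Nat.cast : ℕ → ZMod (p ^ 3)) hasc
  rw [Nat.cast_mul, Nat.cast_mul, ← shiftedFactorial_natCast, Nat.cast_two] at hcast
  rw [hcast, ← shiftedFactorial_prime_sub_one hp (natCast_pow_eq_zero_zmod_pow le_rfl) 1, one_mul]

lemma natCast_choose_mul_prime (hp : 3 < p) {i j : ℕ} (hij : i + j ≤ 2) :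
    (((i + j) * p).choose (i * p) : ZMod (p ^ 3)) = ((i + j).choose i : ZMod (p ^ 3)) := by
  obtain rfl | rfl | ⟨rfl, rfl⟩ : i = 0 ∨ j = 0 ∨ i = 1 ∧ j = 1 := by omega
  · simp
  · simp
  · simpa using natCast_choose_two_mul_prime hp

lemma natCast_choose_mul_shiftedFactorial (hp : 3 < p) (r s : ℕ) {i j : ℕ} (hij : i + j ≤ 2) :
    ((r + s + (i + j) * (p - 1)).choose (r + i * (p - 1)) : ZMod (p ^ 3)) *
        (shiftedFactorial r (i * p : ZMod (p ^ 3)) * shiftedFactorial s (j * p : ZMod (p ^ 3)) *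
          (descPochhammer (ZMod (p ^ 3)) (i + j)).eval ((r + s) + (i + j) * p : ZMod (p ^ 3))) =
      ((i + j).choose i : ZMod (p ^ 3)) *
        (shiftedFactorial (r + s) ((i + j) * p : ZMod (p ^ 3)) *
          ((descPochhammer (ZMod (p ^ 3)) i).eval (r + i * p : ZMod (p ^ 3)) *
            (descPochhammer (ZMod (p ^ 3)) j).eval (s + j * p : ZMod (p ^ 3)))) := by
  have h := choose_mul_ascFactorial_mul_descFactorial (p - 1) r s i j
  rw [Nat.sub_add_cancel hprime.out.one_le] at h
  rw [← natCast_choose_mul_prime hp hij]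
  have hcast := congrArg (Nat.cast : ℕ → ZMod (p ^ 3)) h
  simp only [Nat.cast_mul, ← shiftedFactorial_natCast, ← descPochhammer_eval_eq_descFactorial,
    Nat.cast_add] at hcast
  exact hcast

lemma natCast_choose_mul_descPochhammer (hp : 3 < p) {r s : ℕ} (hr : r < p) (hs : s < p)
    {F G H : ZMod (p ^ 3) → ZMod (p ^ 3)}
    (hF : ∀ x, x ^ 3 = 0 → shiftedFactorial (r + s) x = ((r + s).factorial : ZMod (p ^ 3)) * F x)
    (hG : ∀ x, x ^ 3 = 0 → shiftedFactorial r x * G x = (r.factorial : ZMod (p ^ 3)))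
    (hH : ∀ x, x ^ 3 = 0 → shiftedFactorial s x * H x = (s.factorial : ZMod (p ^ 3)))
    {i j : ℕ} (hij : i + j ≤ 2) :
    ((r + s + (i + j) * (p - 1)).choose (r + i * (p - 1)) : ZMod (p ^ 3)) *
        (descPochhammer (ZMod (p ^ 3)) (i + j)).eval ((r + s) + (i + j) * p : ZMod (p ^ 3)) =
      ((r + s).choose r : ZMod (p ^ 3)) * (F ((i + j : ZMod (p ^ 3)) * (p : ZMod (p ^ 3))) *
          G ((i : ZMod (p ^ 3)) * (p : ZMod (p ^ 3))) *
            H ((j : ZMod (p ^ 3)) * (p : ZMod (p ^ 3)))) *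
        (((i + j).choose i : ZMod (p ^ 3)) *
          ((descPochhammer (ZMod (p ^ 3)) i).eval (r + i * p : ZMod (p ^ 3)) *
            (descPochhammer (ZMod (p ^ 3)) j).eval (s + j * p : ZMod (p ^ 3)))) := by
  have hcube (x : ZMod (p ^ 3)) : (x * (p : ZMod (p ^ 3))) ^ 3 = 0 := by
    rw [mul_pow, natCast_pow_eq_zero_zmod_pow le_rfl, mul_zero]
  have h := natCast_choose_mul_shiftedFactorial hp r s hij
  have hfactorial := congrArg (Nat.cast : ℕ → ZMod (p ^ 3))
    (Nat.add_choose_mul_factorial_mul_factorial r s)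
  rw [← Nat.choose_symm_add, Nat.cast_mul, Nat.cast_mul] at hfactorial
  rw [hF _ (hcube _), ← hfactorial] at h
  refine ((isUnit_factorial_zmod hr).mul (isUnit_factorial_zmod hs)).mul_left_cancel ?_
  conv_lhs => rw [← hG _ (hcube i), ← hH _ (hcube j)]
  linear_combination G ((i : ZMod (p ^ 3)) * (p : ZMod (p ^ 3))) *
    H ((j : ZMod (p ^ 3)) * (p : ZMod (p ^ 3))) * h

lemma exists_shiftedFactorial_mul_eq_of_cube_eq_zero {R : Type*} [CommRing R] {r : ℕ}
    (hr : ∀ j < r, IsUnit (j + 1 : R)) :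
    ∃ a b : R, ∀ x, x ^ 3 = 0 →
      shiftedFactorial r x * (1 + a * x + b * x ^ 2) = r.factorial := by
  obtain ⟨a, b, h⟩ := exists_shiftedFactorial_of_cube_eq_zero hr
  refine ⟨-a, a ^ 2 - b, fun x hx ↦ ?_⟩
  rw [h x hx]
  linear_combination r.factorial * (a ^ 3 - 2 * a * b + (a ^ 2 * b - b ^ 2) * x) * hx

lemma chooseSection_mul_shiftedFactorial {m : ℕ} (hp : p = 6 * m + 1) {τ : ZMod (p ^ 3)}
    (hτ : 12 * τ = (p : ZMod (p ^ 3))) :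
    ((6 * m : ℕ) : ZMod (p ^ 3)) * (15 * (chooseSection m 0 : ZMod (p ^ 3)) -
        10 * (chooseSection m 1 : ZMod (p ^ 3)) + 3 * (chooseSection m 2 : ZMod (p ^ 3))) *
      (shiftedFactorial (2 * m) (-4 * τ) * shiftedFactorial m (-2 * τ)) =
        -8 * shiftedFactorial (3 * m) (-6 * τ) := by
  have hp₃ : 3 < p := by have := hprime.out.one_lt; omega
  have hτ₃ := twelfth_cube_eq_zero hτ hp₃
  have hcube (c : ZMod (p ^ 3)) : (c * τ) ^ 3 = 0 := by rw [mul_pow, hτ₃, mul_zero]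
  have hunit {r : ℕ} (hr : r < p) (j : ℕ) (hj : j < r) : IsUnit ((j : ZMod (p ^ 3)) + 1) :=
    isUnit_natCast_add_one_zmod (by omega)
  have hμ : 6 * (m : ZMod (p ^ 3)) = 12 * τ - 1 := by
    have hcast := congrArg (Nat.cast : ℕ → ZMod (p ^ 3)) hp
    push_cast at hcast
    linear_combination -hcast - hτ
  obtain ⟨a, b, hF⟩ := exists_shiftedFactorial_of_cube_eq_zero
    (hunit (show 2 * m + m < p by omega))
  obtain ⟨c, d, hG⟩ := exists_shiftedFactorial_mul_eq_of_cube_eq_zero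
    (hunit (show 2 * m < p by omega))
  obtain ⟨e, f, hH⟩ := exists_shiftedFactorial_mul_eq_of_cube_eq_zero (hunit (show m < p by omega))
  have hdesc {i j : ℕ} (hij : i + j ≤ 2) :=
    natCast_choose_mul_descPochhammer hp₃ (r := 2 * m) (s := m) (by omega) (by omega) hF hG hH hij
  rw [← hτ, show p - 1 = 6 * m by omega] at hdesc
  have hext := choose_extrapolation hτ₃ hμ (isUnit_three_zmod hp₃)
    (U := ((2 * m + m).choose (2 * m) : ZMod (p ^ 3)))
    (T := fun i j ↦ ((2 * m + m + (i + j) * (6 * m)).choose (2 * m + i * (6 * m)) : ZMod (p ^ 3)))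
    (F := fun x ↦ 1 + a * x + b * x ^ 2) (G := fun x ↦ 1 + c * x + d * x ^ 2)
    (H := fun x ↦ 1 + e * x + f * x ^ 2) (fun _ _ ↦ rfl) (fun _ _ ↦ rfl) (fun _ _ ↦ rfl)
    fun i j hij ↦ by convert hdesc hij using 3 <;> push_cast <;> ring_nf
  have hsection (s : ℕ) : (chooseSection m s : ZMod (p ^ 3)) = ∑ j ∈ range (s + 1),
      ((2 * m + m + s * (6 * m)).choose (2 * m + j * (6 * m)) : ZMod (p ^ 3)) := by
    rw [chooseSection, Nat.cast_sum]
    exact sum_congr rfl fun j _ ↦ by congr 2 <;> ring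
  have hfactorial := congrArg (Nat.cast : ℕ → ZMod (p ^ 3))
    (Nat.add_choose_mul_factorial_mul_factorial (2 * m) m)
  rw [← Nat.choose_symm_add, Nat.cast_mul, Nat.cast_mul] at hfactorial
  simp only [hsection, sum_range_succ, sum_range_zero, Nat.reduceAdd, zero_add, add_zero]
    at hext ⊢
  rw [show 3 * m = 2 * m + m by ring, hF _ (hcube (-6)), ← hfactorial, ← hG _ (hcube (-4)),
    ← hH _ (hcube (-2))]
  push_cast
  linear_combination shiftedFactorial (2 * m) (-4 * τ) * shiftedFactorial m (-2 * τ) * hext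

end ChooseCongruence

section OneModThree

/- Since `K` is a multiple of `π`, the square of `J + K` is `s + 2 * π + K ^ 2` with `s = J ^ 2`. -/
lemma eq_of_mul_eq_of_add_sq_eq {R : Type*} [CommRing R] {π J K W U s Q X : R} (hπ : π ^ 3 = 0)
    (hJK : J * K = π) (hX : (J + K) ^ 2 = 4 * X ^ 2) (hU : IsUnit U) (hJ : J * W = -U)
    (hs : s * W ^ 2 = U ^ 2) (hQ : s * Q = 2 * π ^ 2) :
    s = 4 * X ^ 2 - 2 * π - K ^ 2 ∧ Q = 2 * K ^ 2 ∧ 4 * X ^ 2 * K ^ 2 = π ^ 2 := by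
  have hJW : IsUnit (J * W) := hJ ▸ hU.neg
  have hsJ : s = J ^ 2 := by
    refine ((isUnit_of_mul_isUnit_right hJW).pow 2).mul_right_cancel ?_
    rw [hs, ← mul_pow, hJ, neg_sq]
  have hunit := isUnit_of_mul_isUnit_left hJW
  obtain ⟨c, rfl⟩ : ∃ c, K = π * c := by
    obtain ⟨c, hc⟩ := hunit.exists_right_inv
    exact ⟨c, by linear_combination c * hJK - K * hc⟩
  refine ⟨?_, (hunit.pow 2).mul_left_cancel ?_, ?_⟩
  · linear_combination hsJ + hX - 2 * hJK
  · rw [← hsJ, hQ, hsJ]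
    linear_combination -2 * (J * (π * c) + π) * hJK
  · rw [← hX]
    linear_combination (J * (π * c) + π + 2 * (π * c) ^ 2) * hJK + (2 * c ^ 2 + π * c ^ 4) * hπ

lemma isUnit_intCast_of_eq_sq_add_three_mul_sq {p : ℕ} (hp : p.Prime) (hp₃ : 3 < p) {x y : ℤ}
    (hxy : (p : ℤ) = x ^ 2 + 3 * y ^ 2) (r : ℕ) : IsUnit (x : ZMod (p ^ r)) := by
  rw [ZMod.coe_int_isUnit_iff_isCoprime, Nat.cast_pow]
  have hprime := Nat.prime_iff_prime_int.1 hp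
  refine ((hprime.irreducible.coprime_iff_not_dvd).2 fun hx ↦ ?_).pow_left
  have hy : (p : ℤ) ∣ y := by
    have hdvd : (p : ℤ) ∣ 3 * y ^ 2 :=
      (dvd_add_right (dvd_pow hx two_ne_zero)).1 (hxy ▸ dvd_refl _)
    refine hprime.dvd_of_dvd_pow ((hprime.dvd_or_dvd hdvd).resolve_left fun h ↦ ?_)
    exact absurd (Int.le_of_dvd (by norm_num) h) (by omega)
  have hsq : (p : ℤ) * p ∣ p := by
    conv_rhs => rw [hxy]
    rw [← pow_two]
    exact dvd_add (pow_dvd_pow_of_dvd hx 2) ((pow_dvd_pow_of_dvd hy 2).mul_left 3)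
  refine hprime.not_isUnit (isUnit_of_dvd_one ((mul_dvd_mul_iff_left hprime.ne_zero).1 ?_))
  rwa [mul_one]

variable {p m : ℕ} [hprime : Fact p.Prime] (hp : p = 6 * m + 1) {x y : ℤ}
  (hxy : (p : ℤ) = x ^ 2 + 3 * y ^ 2)

include hp hxy

lemma exists_reducesTo_centralSums_of_eq_sq_add_three_mul_sq :
    ∃ K : ZMod (p ^ 3),
      ReducesTo (centralSum p 0) (4 * (x : ZMod (p ^ 3)) ^ 2 - 2 * (p : ZMod (p ^ 3)) - K ^ 2) ∧
      ReducesTo (9 * centralSum p 2 + 9 * centralSum p 1 + 2 * centralSum p 0) (2 * K ^ 2) ∧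
      ReducesTo ((p : ℚ) ^ 2 / (4 * (x : ℚ) ^ 2)) (K ^ 2) := by
  have hp₃ : 3 < p := by have := hprime.out.one_lt; omega
  obtain ⟨τ, hτ⟩ := (isUnit_twelve_zmod hp₃).dvd (a := (p : ZMod (p ^ 3)))
  obtain ⟨s, Q, hs, hQ, hsW, hsQ⟩ := exists_reducesTo_centralSums hτ.symm hp
  obtain ⟨J, K, hJK, hJx, hJ⟩ := exists_mul_eq_natCast_and_eight_mul_eq hp hxy
  have h2 : IsUnit (2 : ZMod (p ^ 3)) := isUnit_two_zmod (by omega)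
  have hU : IsUnit (shiftedFactorial (3 * m) (-6 * τ)) :=
    isUnit_shiftedFactorial_of_cube_eq_zero (by omega)
      (by rw [mul_pow, twelfth_cube_eq_zero hτ.symm hp₃, mul_zero])
  have hJU : J * (shiftedFactorial (2 * m) (-4 * τ) * shiftedFactorial m (-2 * τ)) =
      -shiftedFactorial (3 * m) (-6 * τ) := by
    refine (h2.pow 3).mul_left_cancel ?_
    have h := chooseSection_mul_shiftedFactorial hp hτ.symm
    rw [← hJ] at h
    linear_combination h
  obtain ⟨rfl, rfl, hK⟩ := eq_of_mul_eq_of_add_sq_eq (natCast_pow_eq_zero_zmod_pow le_rfl)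
    hJK hJx hU hJU hsW hsQ
  refine ⟨K, hs, hQ, ((ReducesTo.natCast p).pow 2).div
    ((ReducesTo.ofNat 4).mul ((ReducesTo.intCast x).pow 2)) ?_ hK⟩
  convert (h2.pow 2).mul
    ((isUnit_intCast_of_eq_sq_add_three_mul_sq hprime.out hp₃ hxy 3).pow 2) using 2
  norm_num

lemma ratCongr_of_eq_six_mul_add_one :
    ratCongr p 3 (centralSum p 2)
        (4 / 9 * (x : ℚ) ^ 2 - 5 / 9 * p + p ^ 2 / (36 * (x : ℚ) ^ 2)) ∧
      ratCongr p 3 (centralSum p 3)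
        (-(2 / 9) * (x : ℚ) ^ 2 + 4 / 9 * p - 7 * p ^ 2 / (72 * (x : ℚ) ^ 2)) := by
  have hp₃ : 3 < p := by have := hprime.out.one_lt; omega
  have hp' : p = 2 * (3 * m) + 1 := by omega
  obtain ⟨K, hzero, hquad, hK⟩ := exists_reducesTo_centralSums_of_eq_sq_add_three_mul_sq hp hxy
  have hlin := reducesTo_linear_centralSum_cube hp
  have hx := (ReducesTo.ofNat (R := ZMod (p ^ 3)) 4).mul ((ReducesTo.intCast x).pow 2)
  have hP (n : ℕ) : ReducesTo (n * p : ℚ) (n * p : ZMod (p ^ 3)) :=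
    (ReducesTo.natCast n).mul (.natCast p)
  have h2 : IsUnit (2 : ZMod (p ^ 3)) := isUnit_two_zmod (by omega)
  have h3 : IsUnit (3 : ZMod (p ^ 3)) := isUnit_three_zmod hp₃
  constructor
  · refine ratCongr_of_reducesTo_natCast_mul (d := 9)
      (by convert h3.pow 2 using 1; norm_num) ?_
    convert (reducesTo_nine_mul_centralSum_two hzero hlin hquad).sub
      ((hx.sub (hP 5)).add hK) using 1
    all_goals push_cast; ring
  · refine ratCongr_of_reducesTo_natCast_mul (d := 18)
      (by convert h2.mul (h3.pow 2) using 1; norm_num) ?_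
    convert (reducesTo_eighteen_mul_centralSum_three hp' le_rfl hzero hlin hquad).sub
      (((hP 8).sub hx).sub ((ReducesTo.ofNat 7).mul hK)) using 1
    all_goals push_cast; ring

end OneModThree

theorem statement3 (p : ℕ) (hp : p.Prime) (hp3 : 3 < p) :
    (∀ x y : ℤ, p % 3 = 1 → (p : ℤ) = x^2 + 3*y^2 →
      ratCongr p 3
        (∑ k ∈ Finset.range p, (k:ℚ)^2 * ((2*k).choose k : ℚ)^3 / 16^k)
        (4/9*(x:ℚ)^2 - 5/9*(p:ℚ) + (p:ℚ)^2/(36*(x:ℚ)^2)) ∧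
      ratCongr p 3
        (∑ k ∈ Finset.range p, (k:ℚ)^3 * ((2*k).choose k : ℚ)^3 / 16^k)
        (-(2/9)*(x:ℚ)^2 + 4/9*(p:ℚ) - 7*(p:ℚ)^2/(72*(x:ℚ)^2))) ∧
    (p % 3 = 2 →
      ratCongr p 2
        (∑ k ∈ Finset.range p, (k:ℚ)^2 * ((2*k).choose k : ℚ)^3 / 16^k)
        (-(2/9)*R3 p - (p:ℚ)/3) ∧
      ratCongr p 2
        (∑ k ∈ Finset.range p, (k:ℚ)^3 * ((2*k).choose k : ℚ)^3 / 16^k)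
        (4/9*R3 p + (p:ℚ)/3)) := by
  have := Fact.mk hp
  have hodd : p % 2 = 1 := hp.eq_two_or_odd.resolve_left (by omega)
  have hsum (j : ℕ) : ∑ k ∈ range p, (k : ℚ) ^ j * ((2 * k).choose k : ℚ) ^ 3 / 16 ^ k =
      centralSum p j := by
    simp only [centralSum, centralTerm, mul_div_assoc]
  rw [hsum, hsum]
  refine ⟨fun x y hmod hxy ↦ ?_, fun hmod ↦ ?_⟩
  · exact ratCongr_of_eq_six_mul_add_one (m := p / 6) (by omega) hxy
  · exact ratCongr_of_eq_six_mul_add_five (m := p / 6) (by omega)
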